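/- Boundary Poincaré inequality: there is a constant C > 0, depending only on n, d, and C₀, such that for every u ∈ W, every x ∈ Γ, and every r > 0 with Tu = 0 σ-almost everywhere on Γ ∩ B(x,r), one has ⨍_{B(x,r)} |u(y)| dy ≤ C r^{−d} ∫_{B(x,r)} |∇u| dm. -/

import Mathlib

open MeasureTheory Metric Set Filter
open scoped ENNReal NNReal Topology

noncomputable section

/-- Euclidean space `ℝⁿ`. -/
abbrev Euc (n : ℕ) := EuclideanSpace ℝ (Fin n)

/-- `Γ ⊆ ℝⁿ` is `d`-Ahlfors regular with constant `C₀`. -/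
def AhlforsRegular (n : ℕ) (d C₀ : ℝ) (Γ : Set (Euc n)) : Prop :=
  ∀ x ∈ Γ, ∀ r : ℝ, 0 < r →
    ENNReal.ofReal (C₀⁻¹ * r ^ d) ≤ μH[d] (Γ ∩ ball x r) ∧
      μH[d] (Γ ∩ ball x r) ≤ ENNReal.ofReal (C₀ * r ^ d)

/-- The weight `w(x) = dist(x, Γ) ^ (d + 1 - n)`. -/
def weightW (n : ℕ) (d : ℝ) (Γ : Set (Euc n)) (x : Euc n) : ℝ :=
  infDist x Γ ^ (d + 1 - (n : ℝ))

/-- The measure `m` with density `w` with respect to Lebesgue measure. -/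
def measW (n : ℕ) (d : ℝ) (Γ : Set (Euc n)) : Measure (Euc n) :=
  volume.withDensity fun x => ENNReal.ofReal (weightW n d Γ x)

/-- `v` is a distributional gradient of `u` on the open set `E`: for every smooth
compactly supported test function `φ` with support in `E`, `∫_E u ∇φ = -∫_E φ v`. -/
def IsDistribGradOn {n : ℕ} (u : Euc n → ℝ) (v : Euc n → Euc n) (E : Set (Euc n)) : Prop :=
  ∀ φ : Euc n → ℝ, ContDiff ℝ (⊤ : ℕ∞) φ → HasCompactSupport φ → tsupport φ ⊆ E →
    ∫ x in E, u x • gradient φ x = -∫ x in E, φ x • v x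

/-- The averages of `u` over small balls centered at `x` converge to `t`. -/
def HasTraceAt {n : ℕ} (u : Euc n → ℝ) (x : Euc n) (t : ℝ) : Prop :=
  Tendsto (fun ρ : ℝ => ⨍ y in ball x ρ, u y) (𝓝[>] (0 : ℝ)) (𝓝 t)

/-- `u` belongs to the weighted Sobolev space `W = Ẇ^{1,2}_w(Ω)`, `Ω = Γᶜ`, with
distributional gradient `v` on `Ω` lying in `L²(Ω, m)`. -/
structure MemW (n : ℕ) (d : ℝ) (Γ : Set (Euc n)) (u : Euc n → ℝ) (v : Euc n → Euc n) :
    Prop where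
  locInt : LocallyIntegrableOn u Γᶜ volume
  gradLocInt : LocallyIntegrableOn v Γᶜ volume
  isGrad : IsDistribGradOn u v Γᶜ
  l2 : ∫⁻ x in Γᶜ, ENNReal.ofReal (‖v x‖ ^ 2) ∂(measW n d Γ) < ⊤

/-- `u` belongs to the local space `W_r(E)`: `u ∈ L¹_loc(E)` and `φ u` (extended by `0`)
belongs to `W` for every smooth compactly supported `φ` with support in `E`. -/
def MemWrOn (n : ℕ) (d : ℝ) (Γ : Set (Euc n)) (E : Set (Euc n)) (u : Euc n → ℝ) : Prop :=
  LocallyIntegrableOn u E volume ∧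
    ∀ φ : Euc n → ℝ, ContDiff ℝ (⊤ : ℕ∞) φ → HasCompactSupport φ → tsupport φ ⊆ E →
      ∃ vφ : Euc n → Euc n, MemW n d Γ (fun x => φ x * u x) vφ

/-- Degenerate ellipticity and boundedness conditions for the matrix `A`. -/
def EllipticOn (n : ℕ) (d : ℝ) (Γ : Set (Euc n)) (A : Euc n → Euc n →L[ℝ] Euc n)
    (C₁ : ℝ) : Prop :=
  ∀ x, x ∉ Γ →
    (∀ ξ ζ : Euc n, |∑ i, A x ξ i * ζ i| ≤ C₁ * weightW n d Γ x * ‖ξ‖ * ‖ζ‖) ∧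
      ∀ ξ : Euc n, C₁⁻¹ * weightW n d Γ x * ‖ξ‖ ^ 2 ≤ ∑ i, A x ξ i * ξ i

/-- `u`, with gradient `v`, is a weak subsolution of `- div A ∇u = 0` on `U ⊆ Ω = Γᶜ`. -/
def SubsolOn {n : ℕ} (Γ : Set (Euc n)) (A : Euc n → Euc n →L[ℝ] Euc n)
    (v : Euc n → Euc n) (U : Set (Euc n)) : Prop :=
  ∀ φ : Euc n → ℝ, ContDiff ℝ (⊤ : ℕ∞) φ → HasCompactSupport φ → tsupport φ ⊆ U →
    (∀ x, 0 ≤ φ x) → ∫ x in Γᶜ, ∑ i, A x (v x) i * gradient φ x i ≤ 0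

/-- `u`, with gradient `v`, is a weak supersolution of `- div A ∇u = 0` on `U ⊆ Ω = Γᶜ`. -/
def SupersolOn {n : ℕ} (Γ : Set (Euc n)) (A : Euc n → Euc n →L[ℝ] Euc n)
    (v : Euc n → Euc n) (U : Set (Euc n)) : Prop :=
  ∀ φ : Euc n → ℝ, ContDiff ℝ (⊤ : ℕ∞) φ → HasCompactSupport φ → tsupport φ ⊆ U →
    (∀ x, 0 ≤ φ x) → 0 ≤ ∫ x in Γᶜ, ∑ i, A x (v x) i * gradient φ x i

/-- `u`, with gradient `v`, is a weak solution of `- div A ∇u = 0` on `U ⊆ Ω = Γᶜ`. -/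
def SolOn {n : ℕ} (Γ : Set (Euc n)) (A : Euc n → Euc n →L[ℝ] Euc n)
    (v : Euc n → Euc n) (U : Set (Euc n)) : Prop :=
  ∀ φ : Euc n → ℝ, ContDiff ℝ (⊤ : ℕ∞) φ → HasCompactSupport φ → tsupport φ ⊆ U →
    ∫ x in Γᶜ, ∑ i, A x (v x) i * gradient φ x i = 0

/-!
Since `d < n - 1`, the function `dist(·, Γ)⁻¹` is locally integrable, so from any vertex almost
every segment avoids `Γ` away from the vertex. Along such segments `u` can be mollified and
differentiated, and integrating radially from a boundary point `z` with trace `a` bounds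
`∫_{B(x,r)} |u - a|` by a truncated Riesz potential of `|∇u|` at `z`. Integrating this in `z` over
`Γ ∩ B(x,r/2)`, the potential falls on `σ`; by upper regularity of `σ`, the potential of `σ` at `ξ`
is at most a multiple of `r ^ (n - 1) * dist(ξ, Γ) ^ (d + 1 - n)`, which is where the weight comes
from, while lower regularity bounds the left-hand side from below by a multiple of `r ^ d`.
-/

open AffineMap (lineMap)
open Module (finrank)

variable {E : Type*} [NormedAddCommGroup E] [NormedSpace ℝ E]

section Homothety

variable [MeasurableSpace E] [BorelSpace E] [FiniteDimensional ℝ E] {μ : Measure E}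
  [μ.IsAddHaarMeasure]

lemma measurable_lineMap {α : Type*} [MeasurableSpace α] {a b : α → E} {t : α → ℝ}
    (ha : Measurable a) (hb : Measurable b) (ht : Measurable t) :
    Measurable fun p => (lineMap (a p) (b p) (t p) : E) := by
  simp only [AffineMap.lineMap_apply_module]
  fun_prop

lemma map_lineMap (z : E) {t : ℝ} (ht : 0 < t) :
    μ.map (fun y => lineMap z y t) =
      ENNReal.ofReal (t ^ finrank ℝ E)⁻¹ • μ := by
  have h : (fun y => lineMap z y t) =
      (fun y => (z - t • z) + y) ∘ (fun y : E => t • y) := by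
    ext y
    simp only [AffineMap.lineMap_apply_module, Function.comp_apply, sub_smul, one_smul]
  rw [h, ← Measure.map_map (by fun_prop) (by fun_prop), Measure.map_addHaar_smul _ ht.ne',
    Measure.map_smul, map_add_left_eq_self, abs_of_pos (by positivity)]

lemma quasiMeasurePreserving_lineMap (z : E) {t : ℝ} (ht : 0 < t) :
    Measure.QuasiMeasurePreserving (fun y => lineMap z y t) μ μ :=
  ⟨measurable_lineMap measurable_const measurable_id measurable_const, by
    rw [map_lineMap z ht]; exact Measure.smul_absolutelyContinuous⟩

lemma setLIntegral_comp_lineMap_le {g : E → ℝ≥0∞} (hg : Measurable g) (z : E) {t : ℝ}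
    (ht : 0 < t) {A S : Set E} (hS : MeasurableSet S)
    (hAS : MapsTo (fun y => lineMap z y t) A S) :
    ∫⁻ y in A, g (lineMap z y t) ∂μ ≤
      ENNReal.ofReal (t ^ finrank ℝ E)⁻¹ * ∫⁻ ξ in S, g ξ ∂μ := by
  have hf : Measurable fun y : E => (lineMap z y t : E) :=
    measurable_lineMap measurable_const measurable_id measurable_const
  calc ∫⁻ y in A, g (lineMap z y t) ∂μ
      ≤ ∫⁻ y in (fun y => lineMap z y t) ⁻¹' S, g (lineMap z y t) ∂μ :=
        lintegral_mono_set hAS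
    _ = ∫⁻ ξ in S, g ξ ∂μ.map (fun y => lineMap z y t) :=
        (setLIntegral_map hS hg hf).symm
    _ = _ := by rw [map_lineMap z ht, Measure.restrict_smul, lintegral_smul_measure, smul_eq_mul]

/-- Integrate first in whichever endpoint is moved by a factor at least `1 / 2`. -/
lemma lintegral_lintegral_comp_lineMap_le {g : E → ℝ≥0∞} (hg : Measurable g) {A : Set E}
    (hA : Convex ℝ A) (hAm : MeasurableSet A) {t : ℝ} (ht : t ∈ Icc (0 : ℝ) 1) :
    ∫⁻ z in A, ∫⁻ y in A, g (lineMap z y t) ∂μ ∂μ ≤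
      2 ^ finrank ℝ E * μ A * ∫⁻ ξ in A, g ξ ∂μ := by
  have hlarge : ∀ s ∈ Icc (1 / 2 : ℝ) 1, ∫⁻ z in A, ∫⁻ y in A, g (lineMap z y s) ∂μ ∂μ ≤
      2 ^ finrank ℝ E * μ A * ∫⁻ ξ in A, g ξ ∂μ := by
    intro s hs
    have hs0 : 0 < s := by linarith [hs.1]
    have hc : ENNReal.ofReal (s ^ finrank ℝ E)⁻¹ ≤ 2 ^ finrank ℝ E := by
      rw [← inv_pow, ENNReal.ofReal_pow (by positivity)]
      gcongr
      rw [← ENNReal.ofReal_ofNat]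
      exact ENNReal.ofReal_le_ofReal (inv_le_of_inv_le₀ (by norm_num) (by linarith [hs.1]))
    calc ∫⁻ z in A, ∫⁻ y in A, g (lineMap z y s) ∂μ ∂μ
        ≤ ∫⁻ z in A, 2 ^ finrank ℝ E * ∫⁻ ξ in A, g ξ ∂μ ∂μ := by
          refine setLIntegral_mono' hAm fun z hz => ?_
          refine (setLIntegral_comp_lineMap_le hg z hs0 hAm fun y hy => ?_).trans (by gcongr)
          exact hA.lineMap_mem hz hy ⟨hs0.le, hs.2⟩
      _ = _ := by rw [setLIntegral_const]; ring
  rcases le_total (1 / 2) t with h | h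
  · exact hlarge t ⟨h, ht.2⟩
  · have hmeas : Measurable fun p : E × E => g (lineMap p.1 p.2 t) :=
      hg.comp (measurable_lineMap measurable_fst measurable_snd measurable_const)
    rw [lintegral_lintegral_swap hmeas.aemeasurable]
    simpa only [AffineMap.lineMap_apply_one_sub] using
      hlarge (1 - t) ⟨by linarith, by linarith [ht.1]⟩

end Homothety

section Mollify

open ContinuousLinearMap (lsmul)
open scoped Convolution

variable [MeasurableSpace E]

/-- `g` bounds the weak gradient of `u` on `U`: tested against nonnegative bump functions
supported in `U`, the derivative of `u` in direction `w` is at most `‖w‖ * g`. This is what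
survives of `|∇u| ≤ g` in the absence of an inner product. -/
def WeakGradBound (μ : Measure E) (u : E → ℝ) (g : E → ℝ≥0∞) (U : Set E) : Prop :=
  ∀ ψ : E → ℝ, ContDiff ℝ (⊤ : ℕ∞) ψ → HasCompactSupport ψ → tsupport ψ ⊆ U → (∀ x, 0 ≤ ψ x) →
    ∀ w : E, ‖∫ x, u x * fderiv ℝ ψ x w ∂μ‖ₑ ≤ ‖w‖ₑ * ∫⁻ x, ENNReal.ofReal (ψ x) * g x ∂μ

lemma WeakGradBound.mono {μ : Measure E} {u : E → ℝ} {g : E → ℝ≥0∞} {U V : Set E}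
    (h : WeakGradBound μ u g V) (hUV : U ⊆ V) : WeakGradBound μ u g U :=
  fun ψ hψ hψc hψU => h ψ hψ hψc (hψU.trans hUV)

variable [BorelSpace E] [FiniteDimensional ℝ E]

/-- The regularisation of `u` by the mollifier `φ`. -/
def mollify (μ : Measure E) (φ : ContDiffBump (0 : E)) (u : E → ℝ) : E → ℝ :=
  φ.normed μ ⋆[lsmul ℝ ℝ, μ] u

/-- The regularisation of a nonnegative function `g` by the mollifier `φ`. -/
def lmollify (μ : Measure E) (φ : ContDiffBump (0 : E)) (g : E → ℝ≥0∞) : E → ℝ≥0∞ :=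
  (fun y => ENNReal.ofReal (φ.normed μ y)) ⋆ₗ[μ] g

variable {μ : Measure E} [μ.IsAddHaarMeasure] (φ : ContDiffBump (0 : E))

lemma measurable_lmollify {g : E → ℝ≥0∞} (hg : Measurable g) : Measurable (lmollify μ φ g) :=
  measurable_lconvolution μ φ.continuous_normed.measurable.ennreal_ofReal hg

lemma setLIntegral_lmollify_le {g : E → ℝ≥0∞} (hg : Measurable g) {A S : Set E}
    (hS : MeasurableSet S) (hAS : thickening φ.rOut A ⊆ S) :
    ∫⁻ ξ in A, lmollify μ φ g ξ ∂μ ≤ ∫⁻ ξ in S, g ξ ∂μ := by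
  have hf : Measurable fun y => ENNReal.ofReal (φ.normed μ y) :=
    φ.continuous_normed.measurable.ennreal_ofReal
  have translate (y : E) (hy : y ∈ Function.support (φ.normed μ)) :
      ∫⁻ ξ in A, g (-y + ξ) ∂μ ≤ ∫⁻ ξ in S, g ξ ∂μ := by
    rw [← (measurePreserving_add_left μ (-y)).setLIntegral_comp_preimage hS hg]
    refine lintegral_mono_set fun ξ hξ => hAS (mem_thickening_iff.2 ⟨ξ, hξ, ?_⟩)
    rw [φ.support_normed_eq, mem_ball_zero_iff] at hy
    simpa [dist_eq_norm] using hy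
  calc ∫⁻ ξ in A, lmollify μ φ g ξ ∂μ
      = ∫⁻ y, ENNReal.ofReal (φ.normed μ y) * ∫⁻ ξ in A, g (-y + ξ) ∂μ ∂μ := by
        simp only [lmollify, lconvolution_def]
        rw [lintegral_lintegral_swap ((hf.comp measurable_snd).mul
          (hg.comp (measurable_snd.neg.add measurable_fst))).aemeasurable]
        exact lintegral_congr fun y => lintegral_const_mul _ (hg.comp (measurable_const_add (-y)))
    _ ≤ ∫⁻ y, ENNReal.ofReal (φ.normed μ y) * ∫⁻ ξ in S, g ξ ∂μ ∂μ := by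
        refine lintegral_mono fun y => ?_
        by_cases hy : y ∈ Function.support (φ.normed μ)
        · exact mul_le_mul_right (translate y hy) _
        · simp [Function.notMem_support.1 hy]
    _ = ∫⁻ ξ in S, g ξ ∂μ := by
        rw [lintegral_mul_const _ hf, ← ofReal_integral_eq_lintegral_ofReal φ.integrable_normed
          (Eventually.of_forall φ.nonneg_normed), φ.integral_normed, ENNReal.ofReal_one, one_mul]

lemma contDiff_mollify {u : E → ℝ} (hu : LocallyIntegrable u μ) : ContDiff ℝ 1 (mollify μ φ u) :=
  φ.hasCompactSupport_normed.contDiff_convolution_left (lsmul ℝ ℝ) φ.contDiff_normed hu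

lemma fderiv_mollify_apply {u : E → ℝ} (hu : LocallyIntegrable u μ) (ξ w : E) :
    fderiv ℝ (mollify μ φ u) ξ w = ∫ t, u t * fderiv ℝ (φ.normed μ) (ξ - t) w ∂μ := by
  have hφc : HasCompactSupport (φ.normed μ) := φ.hasCompactSupport_normed
  have hφ : ContDiff ℝ 1 (φ.normed μ) := φ.contDiff_normed
  rw [mollify, ← convolution_flip,
    (hφc.hasFDerivAt_convolution_right (lsmul ℝ ℝ).flip hu hφ ξ).fderiv,
    convolution_precompR_apply _ hu (hφc.fderiv ℝ) (hφ.continuous_fderiv one_ne_zero),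
    convolution_def]
  simp only [ContinuousLinearMap.flip_apply, ContinuousLinearMap.lsmul_apply, smul_eq_mul, mul_comm]

lemma enorm_fderiv_mollify_le {u : E → ℝ} {g : E → ℝ≥0∞} {U : Set E}
    (hu : LocallyIntegrable u μ) (hug : WeakGradBound μ u g U) {ξ : E}
    (hξ : closedBall ξ φ.rOut ⊆ U) (w : E) :
    ‖fderiv ℝ (mollify μ φ u) ξ w‖ₑ ≤ ‖w‖ₑ * lmollify μ φ g ξ := by
  have hφ : ContDiff ℝ (⊤ : ℕ∞) (φ.normed μ) := φ.contDiff_normed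
  set ψ : E → ℝ := fun t => φ.normed μ (ξ - t)
  have hψ : ContDiff ℝ (⊤ : ℕ∞) ψ := hφ.comp (contDiff_const.sub contDiff_id)
  have hψc : HasCompactSupport ψ :=
    φ.hasCompactSupport_normed.comp_homeomorph (Homeomorph.subLeft ξ)
  have hψU : tsupport ψ ⊆ U := by
    refine (closure_minimal (fun t ht => ?_) isClosed_closedBall).trans hξ
    have : ξ - t ∈ Function.support (φ.normed μ) := ht
    rw [φ.support_normed_eq, mem_ball_zero_iff, ← dist_eq_norm, dist_comm] at this
    exact this.le
  have hψ' (t : E) : fderiv ℝ ψ t w = -fderiv ℝ (φ.normed μ) (ξ - t) w := by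
    have hcomp : HasFDerivAt ψ _ t := (hφ.differentiable (by simp) (ξ - t)).hasFDerivAt.comp t
      ((hasFDerivAt_id t).const_sub ξ)
    simp [hcomp.fderiv]
  have hbound := hug ψ hψ hψc hψU (fun t => φ.nonneg_normed _) w
  simp only [hψ', mul_neg, integral_neg, enorm_neg] at hbound
  rw [fderiv_mollify_apply φ hu, lmollify, lconvolution_comm, lconvolution_def]
  simpa only [ψ, sub_eq_neg_add, mul_comm] using hbound

lemma enorm_mollify_sub_mollify_lineMap_le {u : E → ℝ} {g : E → ℝ≥0∞} {U : Set E}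
    (hu : LocallyIntegrable u μ) (hug : WeakGradBound μ u g U) (z y : E) {s : ℝ} (hs : s ≤ 1)
    (hU : ∀ t ∈ Icc s 1, closedBall (lineMap z y t) φ.rOut ⊆ U) :
    ‖mollify μ φ u y - mollify μ φ u (lineMap z y s)‖ₑ ≤
      ‖y - z‖ₑ * ∫⁻ t in Ioc s 1, lmollify μ φ g (lineMap z y t) := by
  have hsmooth := contDiff_mollify φ hu
  have hderiv (t : ℝ) : HasDerivAt (fun t : ℝ => mollify μ φ u (lineMap z y t))
      (fderiv ℝ (mollify μ φ u) (lineMap z y t) (y - z)) t :=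
    (hsmooth.differentiable one_ne_zero _).hasFDerivAt.comp_hasDerivAt t
      AffineMap.hasDerivAt_lineMap
  have hcont : Continuous fun t : ℝ => fderiv ℝ (mollify μ φ u) (lineMap z y t) (y - z) :=
    ((hsmooth.continuous_fderiv one_ne_zero).comp AffineMap.lineMap_continuous).clm_apply
      continuous_const
  have hftc := intervalIntegral.integral_eq_sub_of_hasDerivAt (a := s) (b := 1)
    (fun t _ => hderiv t) (hcont.intervalIntegrable _ _)
  rw [AffineMap.lineMap_apply_one, intervalIntegral.integral_of_le hs] at hftc
  rw [← hftc, ← lintegral_const_mul' _ _ enorm_ne_top]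
  refine (enorm_integral_le_lintegral_enorm _).trans (setLIntegral_mono' measurableSet_Ioc ?_)
  exact fun t ht => enorm_fderiv_mollify_le φ hu hug (hU t (Ioc_subset_Icc_self ht)) _

end Mollify

section Segments

/-- A sequence of mollifiers whose supports shrink to the origin. -/
def stdMollifier (F : Type*) [NormedAddCommGroup F] (j : ℕ) : ContDiffBump (0 : F) where
  rIn := 1 / ((j : ℝ) + 1)
  rOut := 2 * (1 / ((j : ℝ) + 1))
  rIn_pos := by positivity
  rIn_lt_rOut := lt_two_mul_self (by positivity)

lemma tendsto_rOut_stdMollifier (F : Type*) [NormedAddCommGroup F] :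
    Tendsto (fun j => (stdMollifier F j).rOut) atTop (𝓝 0) := by
  simpa [stdMollifier] using (tendsto_one_div_add_atTop_nhds_zero_nat (𝕜 := ℝ)).const_mul 2

/-- The integral of `g` with respect to length along the part of the segment from `z` to `y`
with parameters in `(s, 1]`. -/
def segmentLIntegral (g : E → ℝ≥0∞) (z : E) (s : ℝ) (y : E) : ℝ≥0∞ :=
  ‖y - z‖ₑ * ∫⁻ t in Ioc s 1, g (lineMap z y t)

variable [MeasurableSpace E] [BorelSpace E] [FiniteDimensional ℝ E] {μ : Measure E}
  [μ.IsAddHaarMeasure]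

lemma measurable_segmentLIntegral {g : E → ℝ≥0∞} (hg : Measurable g) (s : ℝ) :
    Measurable fun p : E × E => segmentLIntegral g p.1 s p.2 :=
  (measurable_snd.sub measurable_fst).enorm.mul
    (Measurable.lintegral_prod_right' (f := fun q : (E × E) × ℝ => g (lineMap q.1.1 q.1.2 q.2))
      (hg.comp (measurable_lineMap measurable_fst.fst measurable_fst.snd measurable_snd)))

lemma setLIntegral_segmentLIntegral_le {g : E → ℝ≥0∞} (hg : Measurable g) {z : E} {A : Set E}
    (hA : MeasurableSet A) {L : ℝ≥0∞} (hL : ∀ y ∈ A, ‖y - z‖ₑ ≤ L) (s : ℝ) :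
    ∫⁻ y in A, segmentLIntegral g z s y ∂μ ≤
      L * ∫⁻ t in Ioc s 1, ∫⁻ y in A, g (lineMap z y t) ∂μ := by
  have hmeas : Measurable fun p : E × ℝ => g (lineMap z p.1 p.2) :=
    hg.comp (measurable_lineMap measurable_const measurable_fst measurable_snd)
  calc ∫⁻ y in A, segmentLIntegral g z s y ∂μ
      ≤ ∫⁻ y in A, L * (∫⁻ t in Ioc s 1, g (lineMap z y t)) ∂μ :=
        setLIntegral_mono' hA fun y hy => mul_le_mul_left (hL y hy) _
    _ = _ := by
        rw [lintegral_const_mul _ hmeas.lintegral_prod_right',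
          lintegral_lintegral_swap hmeas.aemeasurable]

lemma setLIntegral_ball_segmentLIntegral_le {g : E → ℝ≥0∞} (hg : Measurable g) (z : E) (R : ℝ)
    {s : ℝ} (hs : 0 ≤ s) :
    ∫⁻ y in ball z R, segmentLIntegral g z s y ∂μ ≤ ENNReal.ofReal R *
      ∫⁻ t in Ioc s 1, ENNReal.ofReal (t ^ finrank ℝ E)⁻¹ * ∫⁻ ξ in ball z (t * R), g ξ ∂μ := by
  refine (setLIntegral_segmentLIntegral_le (L := .ofReal R) hg measurableSet_ball
    (fun y hy => ?_) s).trans ?_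
  · rw [← ofReal_norm, ← dist_eq_norm]
    exact ENNReal.ofReal_le_ofReal (mem_ball.1 hy).le
  · gcongr ENNReal.ofReal R * ?_
    refine setLIntegral_mono' measurableSet_Ioc fun t ht => ?_
    have ht0 : 0 < t := hs.trans_lt ht.1
    refine setLIntegral_comp_lineMap_le hg z ht0 measurableSet_ball fun y hy => ?_
    rw [mem_ball, dist_lineMap_left, Real.norm_of_nonneg ht0.le, dist_comm]
    exact mul_lt_mul_of_pos_left (mem_ball.1 hy) ht0

lemma lintegral_lintegral_segmentLIntegral_le {g : E → ℝ≥0∞} (hg : Measurable g) {A : Set E}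
    (hA : Convex ℝ A) (hAm : MeasurableSet A) :
    ∫⁻ z in A, ∫⁻ y in A, segmentLIntegral g z 0 y ∂μ ∂μ ≤
      ediam A * (2 ^ finrank ℝ E * μ A * ∫⁻ ξ in A, g ξ ∂μ) := by
  have hmeas : Measurable fun p : E × ℝ => ∫⁻ y in A, g (lineMap p.1 y p.2) ∂μ :=
    Measurable.lintegral_prod_right' (f := fun q : (E × ℝ) × E => g (lineMap q.1.1 q.2 q.1.2))
      (hg.comp (measurable_lineMap measurable_fst.fst measurable_snd measurable_fst.snd))
  calc ∫⁻ z in A, ∫⁻ y in A, segmentLIntegral g z 0 y ∂μ ∂μ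
      ≤ ∫⁻ z in A, ediam A * (∫⁻ t in Ioc 0 1, ∫⁻ y in A, g (lineMap z y t) ∂μ) ∂μ :=
        setLIntegral_mono' hAm fun z hz => setLIntegral_segmentLIntegral_le hg hAm
          (fun y hy => by rw [← edist_eq_enorm_sub]; exact edist_le_ediam_of_mem hy hz) 0
    _ = ediam A * ∫⁻ t in Ioc (0 : ℝ) 1, ∫⁻ z in A, ∫⁻ y in A, g (lineMap z y t) ∂μ ∂μ := by
        rw [lintegral_const_mul _ hmeas.lintegral_prod_right',
          lintegral_lintegral_swap hmeas.aemeasurable]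
    _ ≤ ediam A * ∫⁻ t in Ioc (0 : ℝ) 1, 2 ^ finrank ℝ E * μ A * ∫⁻ ξ in A, g ξ ∂μ := by
        gcongr ediam A * ?_
        exact setLIntegral_mono' measurableSet_Ioc fun t ht =>
          lintegral_lintegral_comp_lineMap_le hg hA hAm (Ioc_subset_Icc_self ht)
    _ = _ := by simp

lemma ae_tendsto_mollify {u : E → ℝ} (hu : LocallyIntegrable u μ) :
    ∀ᵐ x ∂μ, Tendsto (fun j => mollify μ (stdMollifier E j) u x) atTop (𝓝 (u x)) :=
  ContDiffBump.ae_convolution_tendsto_right_of_locallyIntegrable (K := 2)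
    (tendsto_rOut_stdMollifier E) (Eventually.of_forall fun j => by simp [stdMollifier]) hu

lemma enorm_sub_lineMap_le_liminf {u : E → ℝ} {g : E → ℝ≥0∞} {U : Set E} (hU : IsOpen U)
    (hu : LocallyIntegrable u μ) (hug : WeakGradBound μ u g U) {z y : E} {s : ℝ} (hs : s ≤ 1)
    (hseg : ∀ t ∈ Icc s 1, lineMap z y t ∈ U)
    (hy : Tendsto (fun j => mollify μ (stdMollifier E j) u y) atTop (𝓝 (u y)))
    (hz : Tendsto (fun j => mollify μ (stdMollifier E j) u (lineMap z y s)) atTop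
      (𝓝 (u (lineMap z y s)))) :
    ‖u y - u (lineMap z y s)‖ₑ ≤
      liminf (fun j => segmentLIntegral (lmollify μ (stdMollifier E j) g) z s y) atTop := by
  have hcompact : IsCompact (lineMap z y '' Icc s 1) :=
    isCompact_Icc.image AffineMap.lineMap_continuous
  obtain ⟨δ, hδ, hδU⟩ := hcompact.exists_cthickening_subset_open hU (image_subset_iff.2 hseg)
  rw [← (hy.sub hz).enorm.liminf_eq]
  refine liminf_le_liminf ?_
  filter_upwards [(tendsto_rOut_stdMollifier E).eventually (ge_mem_nhds hδ)] with j hj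
  refine enorm_mollify_sub_mollify_lineMap_le _ hu hug z y hs fun t ht => ?_
  exact ((closedBall_subset_closedBall hj).trans
    (closedBall_subset_cthickening (mem_image_of_mem _ ht) δ)).trans hδU

lemma setLIntegral_enorm_sub_lineMap_le_liminf {u : E → ℝ} {g : E → ℝ≥0∞} {U A : Set E}
    (hU : IsOpen U) (hu : LocallyIntegrable u μ) (hg : Measurable g)
    (hug : WeakGradBound μ u g U) {z : E} {s : ℝ} (hs : s ≤ 1)
    (hseg : ∀ᵐ y ∂μ.restrict A, ∀ t ∈ Icc s 1, lineMap z y t ∈ U)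
    (hz : ∀ᵐ y ∂μ.restrict A, Tendsto (fun j => mollify μ (stdMollifier E j) u (lineMap z y s))
      atTop (𝓝 (u (lineMap z y s)))) :
    ∫⁻ y in A, ‖u y - u (lineMap z y s)‖ₑ ∂μ ≤ liminf (fun j =>
      ∫⁻ y in A, segmentLIntegral (lmollify μ (stdMollifier E j) g) z s y ∂μ) atTop := by
  refine le_trans (lintegral_mono_ae ?_) (lintegral_liminf_le fun j =>
    (measurable_segmentLIntegral (measurable_lmollify _ hg) s).comp measurable_prodMk_left)
  filter_upwards [hseg, hz, ae_restrict_of_ae (ae_tendsto_mollify hu)] with y hseg hz hy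
  exact enorm_sub_lineMap_le_liminf hU hu hug hs hseg hy hz

end Segments

section Shadows

lemma lintegral_enorm_sub_inv_eq_top {a b c : ℝ} (hab : a < b) (hc : c ∈ Icc a b) :
    ∫⁻ t in Ioc a b, ‖t - c‖ₑ⁻¹ = ⊤ := by
  by_contra hfin
  have hint : IntervalIntegrable (fun t => (t - c)⁻¹) volume a b := by
    rw [intervalIntegrable_iff_integrableOn_Ioc_of_le hab.le]
    refine ⟨by fun_prop, lt_of_le_of_lt (lintegral_mono fun t => ?_) (lt_top_iff_ne_top.2 hfin)⟩
    rcases eq_or_ne (t - c) 0 with h | h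
    · simp [h]
    · rw [enorm_inv h]
  rcases intervalIntegrable_sub_inv_iff.1 hint with h | h
  · exact hab.ne h
  · exact h (uIcc_of_le hab.le ▸ hc)

lemma lintegral_inv_infEDist_lineMap_eq_top {K : Set E} {z y : E} {s t₀ : ℝ} (hs : s < 1)
    (ht₀ : t₀ ∈ Icc s 1) (hK : lineMap z y t₀ ∈ K) :
    ∫⁻ t in Ioc s 1, (infEDist (lineMap z y t) K)⁻¹ = ⊤ := by
  have hle (t : ℝ) : infEDist (lineMap z y t) K ≤ ‖t - t₀‖ₑ * ‖y - z‖ₑ := by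
    refine (infEDist_le_edist_of_mem hK).trans_eq ?_
    rw [edist_eq_enorm_sub, ← enorm_smul]
    simp only [AffineMap.lineMap_apply_module', sub_smul, add_sub_add_right_eq_sub]
  refine top_le_iff.1 ?_
  calc ⊤ = ∫⁻ t in Ioc s 1, ‖t - t₀‖ₑ⁻¹ * ‖y - z‖ₑ⁻¹ := by
        rw [lintegral_mul_const _ (by fun_prop), lintegral_enorm_sub_inv_eq_top hs ht₀,
          ENNReal.top_mul (ENNReal.inv_ne_zero.2 enorm_ne_top)]
    _ ≤ _ := lintegral_mono fun t => by
        rw [← ENNReal.mul_inv (.inr enorm_ne_top) (.inl enorm_ne_top)]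
        exact ENNReal.inv_le_inv.2 (hle t)

variable [MeasurableSpace E]

/-- Almost every half-open segment `(z, y]` issued from any given point `z` avoids `K`: the
shadows that `K` casts when illuminated from a point are null sets. -/
def NullShadows (μ : Measure E) (K : Set E) : Prop :=
  ∀ z : E, ∀ᵐ y ∂μ, ∀ t ∈ Ioc (0 : ℝ) 1, lineMap z y t ∉ K

lemma NullShadows.ae_notMem {μ : Measure E} {K : Set E} (hK : NullShadows μ K) :
    ∀ᵐ y ∂μ, y ∉ K := by
  filter_upwards [hK 0] with y hy
  simpa using hy 1 (right_mem_Ioc.2 one_pos)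

variable [BorelSpace E] [FiniteDimensional ℝ E] {μ : Measure E} [μ.IsAddHaarMeasure]

lemma ae_lintegral_comp_lineMap_lt_top {f : E → ℝ≥0∞} (hf : Measurable f) {z : E}
    (hfin : ∀ R, ∫⁻ ξ in ball z R, f ξ ∂μ ≠ ⊤) {s : ℝ} (hs : 0 < s) :
    ∀ᵐ y ∂μ, ∫⁻ t in Ioc s 1, f (lineMap z y t) < ⊤ := by
  have hmeas : Measurable fun p : E × ℝ => f (lineMap z p.1 p.2) :=
    hf.comp (measurable_lineMap measurable_const measurable_fst measurable_snd)
  rw [← Measure.restrict_univ (μ := μ), ← iUnion_ball_nat z, ae_restrict_iUnion_iff]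
  refine fun k => ae_lt_top hmeas.lintegral_prod_right' (ne_top_of_le_ne_top ?_
    (b := ∫⁻ _ in Ioc s 1, ENNReal.ofReal (s ^ finrank ℝ E)⁻¹ * ∫⁻ ξ in ball z k, f ξ ∂μ) ?_)
  · rw [setLIntegral_const]
    exact ENNReal.mul_ne_top (ENNReal.mul_ne_top ENNReal.ofReal_ne_top (hfin k)) (by simp)
  · rw [lintegral_lintegral_swap hmeas.aemeasurable]
    refine setLIntegral_mono' measurableSet_Ioc fun t ht => ?_
    have ht0 : 0 < t := hs.trans ht.1
    have hmaps : MapsTo (fun y => lineMap z y t) (ball z k) (ball z k) := fun y hy =>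
      (convex_ball z k).lineMap_mem (mem_ball_self (pos_of_mem_ball hy)) hy ⟨ht0.le, ht.2⟩
    refine (setLIntegral_comp_lineMap_le hf z ht0 measurableSet_ball hmaps).trans ?_
    have := ht.1.le
    gcongr

lemma nullShadows_of_lintegral_inv_infEDist_ne_top {K : Set E}
    (hfin : ∀ z R, ∫⁻ ξ in ball z R, (infEDist ξ K)⁻¹ ∂μ ≠ ⊤) : NullShadows μ K := by
  intro z
  have hae (k : ℕ) := ae_lintegral_comp_lineMap_lt_top measurable_infEDist.inv (hfin z)
    (Nat.one_div_pos_of_nat (α := ℝ) (n := k))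
  filter_upwards [ae_all_iff.2 hae] with y hy t ht htK
  obtain ⟨k, hk⟩ := exists_nat_one_div_lt ht.1
  exact (hy k).ne (lintegral_inv_infEDist_lineMap_eq_top (hk.trans_le ht.2) ⟨hk.le, ht.2⟩ htK)

end Shadows

section Poincare

variable [MeasurableSpace E] [BorelSpace E] [FiniteDimensional ℝ E] {μ : Measure E}
  [μ.IsAddHaarMeasure] {K : Set E} {u : E → ℝ} {g : E → ℝ≥0∞}

lemma lintegral_lintegral_enorm_sub_le (hK : IsClosed K) (hKμ : NullShadows μ K)
    (hu : LocallyIntegrable u μ) (hg : Measurable g) {A : Set E} (hA : Convex ℝ A)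
    (hAo : IsOpen A) (hug : WeakGradBound μ u g (A \ K)) :
    ∫⁻ z in A, ∫⁻ y in A, ‖u y - u z‖ₑ ∂μ ∂μ ≤
      ediam A * (2 ^ finrank ℝ E * μ A * ∫⁻ ξ, g ξ ∂μ) := by
  have hAm := hAo.measurableSet
  have hfatou : ∀ᵐ z ∂μ.restrict A, ∫⁻ y in A, ‖u y - u z‖ₑ ∂μ ≤ liminf (fun j =>
      ∫⁻ y in A, segmentLIntegral (lmollify μ (stdMollifier E j) g) z 0 y ∂μ) atTop := by
    filter_upwards [ae_restrict_mem hAm, ae_restrict_of_ae hKμ.ae_notMem,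
      ae_restrict_of_ae (ae_tendsto_mollify hu)] with z hzA hzK hz
    have hseg : ∀ᵐ y ∂μ.restrict A, ∀ t ∈ Icc (0 : ℝ) 1, lineMap z y t ∈ A \ K := by
      filter_upwards [ae_restrict_mem hAm, ae_restrict_of_ae (hKμ z)] with y hyA hyK t ht
      refine ⟨hA.lineMap_mem hzA hyA ht, ?_⟩
      rcases ht.1.eq_or_lt with rfl | ht0
      · simpa using hzK
      · exact hyK t ⟨ht0, ht.2⟩
    simpa using setLIntegral_enorm_sub_lineMap_le_liminf (hAo.sdiff hK) hu hg hug zero_le_one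
      hseg (Eventually.of_forall fun y => by simpa using hz)
  calc ∫⁻ z in A, ∫⁻ y in A, ‖u y - u z‖ₑ ∂μ ∂μ
      ≤ ∫⁻ z in A, liminf (fun j =>
          ∫⁻ y in A, segmentLIntegral (lmollify μ (stdMollifier E j) g) z 0 y ∂μ) atTop ∂μ :=
        lintegral_mono_ae hfatou
    _ ≤ liminf (fun j => ∫⁻ z in A, ∫⁻ y in A,
          segmentLIntegral (lmollify μ (stdMollifier E j) g) z 0 y ∂μ ∂μ) atTop :=
        lintegral_liminf_le fun j =>
          (measurable_segmentLIntegral (measurable_lmollify _ hg) 0).lintegral_prod_right'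
    _ ≤ liminf (fun _ : ℕ => ediam A * (2 ^ finrank ℝ E * μ A * ∫⁻ ξ, g ξ ∂μ)) atTop := by
        refine liminf_le_liminf (Eventually.of_forall fun j => ?_)
        refine (lintegral_lintegral_segmentLIntegral_le (measurable_lmollify _ hg) hA hAm).trans ?_
        gcongr _ * (_ * ?_)
        rw [← setLIntegral_univ g]
        exact setLIntegral_lmollify_le _ hg MeasurableSet.univ (subset_univ _)
    _ = _ := liminf_const _

/-- The average over `t ∈ (0, 1]` of the mass of `g` in `ball z (t * R)`, renormalised to the
unit scale. Up to a constant this is the Riesz potential `∫ |ξ - z| ^ (1 - N) g ξ` over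
`ball z R`, in the form in which radial integration produces it. -/
def conePotential (μ : Measure E) (g : E → ℝ≥0∞) (R : ℝ) (z : E) : ℝ≥0∞ :=
  ∫⁻ t in Ioc (0 : ℝ) 1, ENNReal.ofReal (t ^ finrank ℝ E)⁻¹ * ∫⁻ ξ in ball z (t * R), g ξ ∂μ

lemma setLIntegral_enorm_sub_lineMap_le_conePotential (hK : IsClosed K) (hKμ : NullShadows μ K)
    (hu : LocallyIntegrable u μ) (hg : Measurable g) {z : E} {R : ℝ} (hR : 0 < R)
    (hug : WeakGradBound μ u g (ball z R \ K)) {s : ℝ} (hs : s ∈ Ioc (0 : ℝ) 1) :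
    ∫⁻ y in ball z R, ‖u y - u (lineMap z y s)‖ₑ ∂μ ≤
      ENNReal.ofReal R * conePotential μ g (2 * R) z := by
  have hseg : ∀ᵐ y ∂μ.restrict (ball z R), ∀ t ∈ Icc s 1, lineMap z y t ∈ ball z R \ K := by
    filter_upwards [ae_restrict_mem measurableSet_ball, ae_restrict_of_ae (hKμ z)]
      with y hy hyK t ht
    have ht0 : 0 < t := hs.1.trans_le ht.1
    exact ⟨(convex_ball z R).lineMap_mem (mem_ball_self hR) hy ⟨ht0.le, ht.2⟩, hyK t ⟨ht0, ht.2⟩⟩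
  have hconv := (quasiMeasurePreserving_lineMap z hs.1).ae (ae_tendsto_mollify hu)
  refine (setLIntegral_enorm_sub_lineMap_le_liminf (isOpen_ball.sdiff hK) hu hg hug hs.2 hseg
    (ae_restrict_of_ae hconv)).trans ((liminf_le_liminf ?_).trans_eq (liminf_const _))
  filter_upwards [(tendsto_rOut_stdMollifier E).eventually (ge_mem_nhds (mul_pos hs.1 hR))]
    with j hj
  refine (setLIntegral_ball_segmentLIntegral_le (measurable_lmollify _ hg) z R hs.1.le).trans ?_
  gcongr ENNReal.ofReal R * ?_
  refine (setLIntegral_mono' measurableSet_Ioc fun t ht => ?_).trans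
    (lintegral_mono_set (Ioc_subset_Ioc_left hs.1.le))
  gcongr ENNReal.ofReal _ * ?_
  refine setLIntegral_lmollify_le _ hg measurableSet_ball ((Metric.thickening_ball _ _ _).trans ?_)
  exact ball_subset_ball (by nlinarith [mul_le_mul_of_nonneg_right ht.1.le hR.le])

end Poincare

section RadialPoincare

lemma measure_mul_enorm_setAverage_sub_le {α F : Type*} [MeasurableSpace α]
    [NormedAddCommGroup F] [NormedSpace ℝ F] {ν : Measure α} {S : Set α} {f h : α → F}
    (hS : ν S ≠ ⊤) (hf : IntegrableOn f S ν) (hh : IntegrableOn h S ν) :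
    ν S * ‖(⨍ y in S, f y ∂ν) - ⨍ y in S, h y ∂ν‖ₑ ≤ ∫⁻ y in S, ‖f y - h y‖ₑ ∂ν := by
  have hνS : ν S = ‖ν.real S‖ₑ := by
    rw [Real.enorm_of_nonneg measureReal_nonneg, ofReal_measureReal hS]
  rw [hνS, ← enorm_smul, smul_sub, measure_smul_setAverage f hS, measure_smul_setAverage h hS,
    ← integral_sub hf hh]
  exact enorm_integral_le_lintegral_enorm _

lemma integrableOn_ball {X F : Type*} [PseudoMetricSpace X] [ProperSpace X] [MeasurableSpace X]
    [NormedAddCommGroup F] {ν : Measure X} {f : X → F} (hf : LocallyIntegrable f ν) (z : X)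
    (R : ℝ) : IntegrableOn f (ball z R) ν :=
  (hf.integrableOn_isCompact (isCompact_closedBall z R)).mono_set ball_subset_closedBall

variable [MeasurableSpace E] {μ : Measure E} {u : E → ℝ} {g : E → ℝ≥0∞}

lemma conePotential_mono_radius {R R' : ℝ} (hRR' : R ≤ R') (z : E) :
    conePotential μ g R z ≤ conePotential μ g R' z := by
  refine setLIntegral_mono' measurableSet_Ioc fun t ht => ?_
  have := ht.1.le
  gcongr

lemma setLIntegral_ball_le_four_mul_conePotential {R : ℝ} (hR : 0 ≤ R) (z : E) :
    ∫⁻ ξ in ball z (3 / 4 * R), g ξ ∂μ ≤ 4 * conePotential μ g R z := by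
  calc ∫⁻ ξ in ball z (3 / 4 * R), g ξ ∂μ
      = 4 * ∫⁻ t in Ioc (3 / 4 : ℝ) 1, ∫⁻ ξ in ball z (3 / 4 * R), g ξ ∂μ := by
        rw [setLIntegral_const, Real.volume_Ioc, mul_left_comm, ← ENNReal.ofReal_ofNat 4,
          ← ENNReal.ofReal_mul (by norm_num)]
        norm_num
    _ ≤ 4 * ∫⁻ t in Ioc (3 / 4 : ℝ) 1,
          ENNReal.ofReal (t ^ finrank ℝ E)⁻¹ * ∫⁻ ξ in ball z (t * R), g ξ ∂μ := by
        gcongr 4 * ?_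
        refine setLIntegral_mono' measurableSet_Ioc fun t ht => ?_
        have ht0 : 0 < t := by linarith [ht.1]
        refine le_mul_of_one_le_of_le ?_ (lintegral_mono_set (ball_subset_ball ?_))
        · rw [ENNReal.one_le_ofReal]
          exact one_le_inv₀ (by positivity) |>.2 (pow_le_one₀ ht0.le ht.2)
        · exact mul_le_mul_of_nonneg_right ht.1.le hR
    _ ≤ 4 * conePotential μ g R z := by
        gcongr 4 * ?_
        exact lintegral_mono_set (Ioc_subset_Ioc_left (by norm_num))

variable [BorelSpace E] [FiniteDimensional ℝ E] [μ.IsAddHaarMeasure]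

lemma map_lineMap_restrict_ball (z : E) (R : ℝ) {s : ℝ} (hs : 0 < s) :
    (μ.restrict (ball z R)).map (fun y => lineMap z y s) =
      ENNReal.ofReal (s ^ finrank ℝ E)⁻¹ • μ.restrict (ball z (s * R)) := by
  have hpre : (fun y => lineMap z y s) ⁻¹' ball z (s * R) = ball z R := by
    ext y
    simp only [mem_preimage, mem_ball, dist_lineMap_left, Real.norm_of_nonneg hs.le, dist_comm y,
      mul_lt_mul_iff_right₀ hs]
  rw [← Measure.restrict_smul, ← map_lineMap z hs, Measure.restrict_map
    (quasiMeasurePreserving_lineMap (μ := μ) z hs).measurable measurableSet_ball, hpre]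

lemma integrableOn_ball_comp_lineMap (hu : LocallyIntegrable u μ) (z : E) (R : ℝ) {s : ℝ}
    (hs : 0 < s) : IntegrableOn (fun y => u (lineMap z y s)) (ball z R) μ := by
  have hint : Integrable u ((μ.restrict (ball z R)).map fun y => lineMap z y s) := by
    rw [map_lineMap_restrict_ball z R hs]
    exact (integrableOn_ball hu z _).smul_measure ENNReal.ofReal_ne_top
  exact hint.comp_measurable (quasiMeasurePreserving_lineMap (μ := μ) z hs).measurable

lemma setAverage_ball_comp_lineMap (hu : LocallyIntegrable u μ) (z : E) (R : ℝ) {s : ℝ}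
    (hs : 0 < s) : ⨍ y in ball z R, u (lineMap z y s) ∂μ = ⨍ y in ball z (s * R), u y ∂μ := by
  have hmeas := (quasiMeasurePreserving_lineMap (μ := μ) z hs).measurable
  have hmap := map_lineMap_restrict_ball (μ := μ) z R hs
  have hc : 0 < (s ^ finrank ℝ E)⁻¹ := by positivity
  have hu' : AEStronglyMeasurable u ((μ.restrict (ball z R)).map fun y => lineMap z y s) := by
    rw [hmap]
    exact hu.aestronglyMeasurable.restrict.smul_measure _
  have hint := integral_map hmeas.aemeasurable hu'
  have hvol := congrArg (fun ν : Measure E => ν.real univ) hmap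
  simp only [map_measureReal_apply hmeas MeasurableSet.univ, measureReal_ennreal_smul_apply,
    preimage_univ, measureReal_restrict_apply_univ, ENNReal.toReal_ofReal hc.le] at hvol
  rw [hmap, integral_smul_measure, ENNReal.toReal_ofReal hc.le] at hint
  rw [setAverage_eq, setAverage_eq, ← hint, hvol, smul_smul, mul_inv, mul_right_comm,
    inv_mul_cancel₀ hc.ne', one_mul]

variable {K : Set E}

lemma measure_ball_mul_enorm_setAverage_sub_le_conePotential (hK : IsClosed K)
    (hKμ : NullShadows μ K) (hu : LocallyIntegrable u μ) (hg : Measurable g) {z : E} {R : ℝ}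
    (hR : 0 < R) (hug : WeakGradBound μ u g (ball z R \ K)) {a : ℝ}
    (ha : Tendsto (fun ρ => ⨍ y in ball z ρ, u y ∂μ) (𝓝[>] 0) (𝓝 a)) :
    μ (ball z R) * ‖(⨍ y in ball z R, u y ∂μ) - a‖ₑ ≤
      ENNReal.ofReal R * conePotential μ g (2 * R) z := by
  have hscale : Tendsto (fun s : ℝ => s * R) (𝓝[>] 0) (𝓝[>] 0) :=
    tendsto_nhdsWithin_iff.2 ⟨((continuous_mul_const R).tendsto' 0 0 (zero_mul R)).mono_left
      nhdsWithin_le_nhds, eventually_mem_nhdsWithin.mono fun s hs => mul_pos hs hR⟩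
  refine le_of_tendsto (ENNReal.Tendsto.const_mul ((ha.comp hscale).const_sub _).enorm
    (.inr measure_ball_lt_top.ne)) ?_
  filter_upwards [Ioc_mem_nhdsGT one_pos] with s hs
  rw [Function.comp_apply, ← setAverage_ball_comp_lineMap hu z R hs.1]
  exact (measure_mul_enorm_setAverage_sub_le measure_ball_lt_top.ne (integrableOn_ball hu z R)
    (integrableOn_ball_comp_lineMap hu z R hs.1)).trans
    (setLIntegral_enorm_sub_lineMap_le_conePotential hK hKμ hu hg hR hug hs)

lemma measure_mul_lintegral_enorm_sub_setAverage_le (hK : IsClosed K) (hKμ : NullShadows μ K)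
    (hu : LocallyIntegrable u μ) (hg : Measurable g) {A S : Set E} (hA : Convex ℝ A)
    (hAo : IsOpen A) (hug : WeakGradBound μ u g (A \ K)) (hSA : S ⊆ A) (hS : μ S ≠ ⊤)
    (huS : IntegrableOn u S μ) :
    μ S * ∫⁻ y in A, ‖u y - ⨍ w in S, u w ∂μ‖ₑ ∂μ ≤
      ediam A * (2 ^ finrank ℝ E * μ A * ∫⁻ ξ, g ξ ∂μ) := by
  rcases eq_or_ne (μ S) 0 with hS0 | hS0
  · simp [hS0]
  have hpoint (y : E) : μ S * ‖u y - ⨍ w in S, u w ∂μ‖ₑ ≤ ∫⁻ w in A, ‖u w - u y‖ₑ ∂μ := by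
    have := measure_mul_enorm_setAverage_sub_le hS (integrableOn_const (C := u y) hS) huS
    rw [setAverage_const hS0 hS] at this
    refine this.trans ((lintegral_mono_set hSA).trans_eq ?_)
    simp only [enorm_sub_rev]
  rw [← lintegral_const_mul' _ _ hS]
  exact (lintegral_mono hpoint).trans (lintegral_lintegral_enorm_sub_le hK hKμ hu hg hA hAo hug)

lemma addHaar_ball_eq_two_pow_mul (x z : E) (r : ℝ) :
    μ (ball x r) = 2 ^ finrank ℝ E * μ (ball z (r / 2)) := by
  have h := Measure.addHaar_ball_mul_of_pos μ x two_pos (r / 2)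
  rwa [mul_div_cancel₀ r two_ne_zero, ← Measure.addHaar_ball_center μ z,
    ENNReal.ofReal_pow zero_le_two, ENNReal.ofReal_ofNat] at h

lemma setLIntegral_ball_enorm_sub_setAverage_le_conePotential (hK : IsClosed K)
    (hKμ : NullShadows μ K) (hu : LocallyIntegrable u μ) (hg : Measurable g) {x z : E} {r : ℝ}
    (hug : WeakGradBound μ u g (ball x r \ K)) (hgx : ∀ ξ ∉ ball x r, g ξ = 0)
    (hz : z ∈ ball x (r / 2)) :
    ∫⁻ y in ball x r, ‖u y - ⨍ w in ball z (r / 2), u w ∂μ‖ₑ ∂μ ≤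
      8 * 4 ^ finrank ℝ E * ENNReal.ofReal r * conePotential μ g (2 * r) z := by
  have hr : 0 < r / 2 := pos_of_mem_ball hz
  have hzx : dist z x < r / 2 := mem_ball.1 hz
  have hmass : ∫⁻ ξ, g ξ ∂μ ≤ 4 * conePotential μ g (2 * r) z := by
    rw [← setLIntegral_eq_of_support_subset (s := ball z (3 / 4 * (2 * r)))]
    · exact setLIntegral_ball_le_four_mul_conePotential (by linarith) z
    · refine (Function.support_subset_iff'.2 hgx).trans (ball_subset_ball' ?_)
      rw [dist_comm]
      linarith
  rw [← ENNReal.mul_le_mul_iff_right (measure_ball_pos μ z hr).ne' measure_ball_lt_top.ne]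
  calc μ (ball z (r / 2)) * ∫⁻ y in ball x r, ‖u y - ⨍ w in ball z (r / 2), u w ∂μ‖ₑ ∂μ
      ≤ ediam (ball x r) * (2 ^ finrank ℝ E * μ (ball x r) * ∫⁻ ξ, g ξ ∂μ) :=
        measure_mul_lintegral_enorm_sub_setAverage_le hK hKμ hu hg (convex_ball x r) isOpen_ball
          hug (ball_subset_ball' (by linarith)) measure_ball_lt_top.ne (integrableOn_ball hu z _)
    _ ≤ (2 * ENNReal.ofReal r) * (2 ^ finrank ℝ E * (2 ^ finrank ℝ E * μ (ball z (r / 2))) *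
          (4 * conePotential μ g (2 * r) z)) := by
        rw [← addHaar_ball_eq_two_pow_mul x z r, ← eball_ofReal]
        gcongr
        exact ediam_eball_le
    _ = μ (ball z (r / 2)) *
          (8 * 4 ^ finrank ℝ E * ENNReal.ofReal r * conePotential μ g (2 * r) z) := by
        rw [show (4 : ℝ≥0∞) ^ finrank ℝ E = 2 ^ finrank ℝ E * 2 ^ finrank ℝ E by
          rw [← mul_pow]; norm_num]
        ring

lemma setLIntegral_ball_enorm_sub_le_conePotential (hK : IsClosed K) (hKμ : NullShadows μ K)
    (hu : LocallyIntegrable u μ) (hg : Measurable g) {x z : E} {r : ℝ}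
    (hug : WeakGradBound μ u g (ball x r \ K)) (hgx : ∀ ξ ∉ ball x r, g ξ = 0)
    (hz : z ∈ ball x (r / 2)) {a : ℝ}
    (ha : Tendsto (fun ρ => ⨍ y in ball z ρ, u y ∂μ) (𝓝[>] 0) (𝓝 a)) :
    ∫⁻ y in ball x r, ‖u y - a‖ₑ ∂μ ≤
      4 ^ (finrank ℝ E + 2) * ENNReal.ofReal r * conePotential μ g (2 * r) z := by
  set P := conePotential μ g (2 * r) z
  set c := ⨍ y in ball z (r / 2), u y ∂μ
  set N := finrank ℝ E
  have hr : 0 < r / 2 := pos_of_mem_ball hz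
  have hosc : ∫⁻ y in ball x r, ‖u y - c‖ₑ ∂μ ≤ 8 * 4 ^ N * ENNReal.ofReal r * P :=
    setLIntegral_ball_enorm_sub_setAverage_le_conePotential hK hKμ hu hg hug hgx hz
  have hcenter : μ (ball z (r / 2)) * ‖c - a‖ₑ ≤ ENNReal.ofReal r * P := by
    have hsub : ball z (r / 2) ⊆ ball x r := ball_subset_ball' (by linarith [mem_ball.1 hz])
    refine (measure_ball_mul_enorm_setAverage_sub_le_conePotential hK hKμ hu hg hr
      (hug.mono (sdiff_subset_sdiff_left hsub)) ha).trans ?_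
    gcongr
    · linarith
    · exact conePotential_mono_radius (by linarith) z
  have hmean : μ (ball x r) * ‖c - a‖ₑ ≤ 4 ^ N * (ENNReal.ofReal r * P) := by
    rw [addHaar_ball_eq_two_pow_mul x z r, mul_assoc]
    gcongr
    norm_num
  calc ∫⁻ y in ball x r, ‖u y - a‖ₑ ∂μ
      ≤ ∫⁻ y in ball x r, (‖u y - c‖ₑ + ‖c - a‖ₑ) ∂μ :=
        lintegral_mono fun y => by simpa using enorm_add_le (u y - c) (c - a)
    _ = (∫⁻ y in ball x r, ‖u y - c‖ₑ ∂μ) + μ (ball x r) * ‖c - a‖ₑ := by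
        rw [lintegral_add_right _ measurable_const, setLIntegral_const, mul_comm]
    _ ≤ 8 * 4 ^ N * ENNReal.ofReal r * P + 8 * (4 ^ N * (ENNReal.ofReal r * P)) :=
        add_le_add hosc (hmean.trans (le_mul_of_one_le_left' (by norm_num)))
    _ = 4 ^ (N + 2) * ENNReal.ofReal r * P := by ring

end RadialPoincare

section BoundaryIntegral

lemma lintegral_Ioi_ofReal_rpow {p a : ℝ} (hp : p < -1) (ha : 0 < a) :
    ∫⁻ t in Ioi a, ENNReal.ofReal (t ^ p) = ENNReal.ofReal (-a ^ (p + 1) / (p + 1)) := by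
  rw [← integral_Ioi_rpow_of_lt hp ha, ofReal_integral_eq_lintegral_ofReal
    (integrableOn_Ioi_rpow_of_lt hp ha)]
  filter_upwards [ae_restrict_mem measurableSet_Ioi] with t ht
  exact Real.rpow_nonneg (ha.trans ht).le p

variable [MeasurableSpace E] {μ σ : Measure E} {g : E → ℝ≥0∞}

lemma conePotential_one_le {A d R δ : ℝ} (hA : 0 ≤ A) (hd : d < finrank ℝ E - 1) (hR : 0 < R)
    (hδ : 0 < δ) {ξ : E} (hnear : σ (ball ξ δ) = 0)
    (hfar : ∀ s, δ < s → σ (ball ξ s) ≤ ENNReal.ofReal (A * s ^ d)) :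
    conePotential σ 1 R ξ ≤ ENNReal.ofReal
      (A / (finrank ℝ E - 1 - d) * R ^ ((finrank ℝ E : ℝ) - 1) * δ ^ (d + 1 - finrank ℝ E)) := by
  set N := finrank ℝ E
  have hδR : 0 < δ / R := div_pos hδ hR
  have hcut (t : ℝ) (ht : 0 < t) : ENNReal.ofReal (t ^ N)⁻¹ * σ (ball ξ (t * R)) ≤
      (Ioi (δ / R)).indicator
        (fun t => ENNReal.ofReal (A * R ^ d) * ENNReal.ofReal (t ^ (d - N))) t := by
    by_cases htδ : δ / R < t
    · rw [indicator_of_mem (mem_Ioi.2 htδ)]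
      refine (mul_le_mul_right (hfar _ ((div_lt_iff₀ hR).1 htδ)) _).trans_eq ?_
      rw [← ENNReal.ofReal_mul (by positivity), ← ENNReal.ofReal_mul (by positivity),
        Real.mul_rpow ht.le hR.le, Real.rpow_sub ht, Real.rpow_natCast]
      ring_nf
    · have hle : t * R ≤ δ := (le_div_iff₀ hR).1 (not_lt.1 htδ)
      simp [measure_mono_null (ball_subset_ball hle) hnear]
  calc conePotential σ 1 R ξ
      = ∫⁻ t in Ioc (0 : ℝ) 1, ENNReal.ofReal (t ^ N)⁻¹ * σ (ball ξ (t * R)) := by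
        simp [conePotential, N]
    _ ≤ ∫⁻ t in Ioi (δ / R), ENNReal.ofReal (A * R ^ d) * ENNReal.ofReal (t ^ (d - N)) := by
        rw [← lintegral_indicator measurableSet_Ioi]
        exact (setLIntegral_mono' measurableSet_Ioc fun t ht => hcut t ht.1).trans
          (setLIntegral_le_lintegral _ _)
    _ = ENNReal.ofReal (A * R ^ d * (-(δ / R) ^ (d - N + 1) / (d - N + 1))) := by
        rw [lintegral_const_mul' _ _ ENNReal.ofReal_ne_top,
          lintegral_Ioi_ofReal_rpow (by linarith) hδR, ← ENNReal.ofReal_mul (by positivity)]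
    _ = _ := by
        rw [Real.div_rpow hδ.le hR.le, show (N : ℝ) - 1 = d - (d - N + 1) by ring,
          Real.rpow_sub hR, show d + 1 - (N : ℝ) = d - N + 1 by ring,
          show d - (d - N + 1) - d = -(d - N + 1) by ring, div_neg]
        field_simp

lemma measurable_setLIntegral_ball {X : Type*} [PseudoMetricSpace X] [SecondCountableTopology X]
    [MeasurableSpace X] [OpensMeasurableSpace X] {ν : Measure X} [SFinite ν] {f : X → ℝ≥0∞}
    (hf : Measurable f) : Measurable fun p : X × ℝ => ∫⁻ ξ in ball p.1 p.2, f ξ ∂ν := by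
  have hball : MeasurableSet {q : (X × ℝ) × X | dist q.2 q.1.1 < q.1.2} :=
    measurableSet_lt (by fun_prop) (by fun_prop)
  simp_rw [← lintegral_indicator measurableSet_ball]
  exact ((hf.comp measurable_snd).indicator hball).lintegral_prod_right'

lemma lintegral_setLIntegral_ball {X : Type*} [PseudoMetricSpace X] [SecondCountableTopology X]
    [MeasurableSpace X] [OpensMeasurableSpace X] {ν τ : Measure X} [SFinite ν] [SFinite τ]
    {f : X → ℝ≥0∞} (hf : Measurable f) (s : ℝ) :
    ∫⁻ z, ∫⁻ ξ in ball z s, f ξ ∂ν ∂τ = ∫⁻ ξ, f ξ * τ (ball ξ s) ∂ν := by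
  have hball : MeasurableSet {q : X × X | dist q.2 q.1 < s} :=
    measurableSet_lt (by fun_prop) measurable_const
  have hmeas : Measurable (Function.uncurry fun z => (ball z s).indicator f) :=
    (hf.comp measurable_snd).indicator hball
  simp_rw [← lintegral_indicator measurableSet_ball]
  rw [lintegral_lintegral_swap hmeas.aemeasurable]
  refine lintegral_congr fun ξ => ?_
  rw [← lintegral_indicator_const measurableSet_ball]
  refine lintegral_congr fun z => ?_
  simp only [indicator, mem_ball, dist_comm]

lemma lintegral_conePotential [OpensMeasurableSpace E] [SecondCountableTopology E] [SFinite μ]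
    [SFinite σ] (hg : Measurable g) (R : ℝ) :
    ∫⁻ z, conePotential μ g R z ∂σ = ∫⁻ ξ, g ξ * conePotential σ 1 R ξ ∂μ := by
  have hmeas {ν : Measure E} [SFinite ν] {f : E → ℝ≥0∞} (hf : Measurable f) :
      Measurable fun p : E × ℝ => ENNReal.ofReal (p.2 ^ finrank ℝ E)⁻¹ *
        ∫⁻ ξ in ball p.1 (p.2 * R), f ξ ∂ν :=
    (by fun_prop : Measurable fun p : E × ℝ => ENNReal.ofReal (p.2 ^ finrank ℝ E)⁻¹).mul
      ((measurable_setLIntegral_ball hf).comp (by fun_prop : Measurable fun p : E × ℝ =>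
        (p.1, p.2 * R)))
  have hone := hmeas (ν := σ) (f := 1) measurable_const
  calc ∫⁻ z, conePotential μ g R z ∂σ
      = ∫⁻ t in Ioc (0 : ℝ) 1, ENNReal.ofReal (t ^ finrank ℝ E)⁻¹ *
          ∫⁻ z, ∫⁻ ξ in ball z (t * R), g ξ ∂μ ∂σ := by
        simp only [conePotential]
        rw [lintegral_lintegral_swap (hmeas hg).aemeasurable]
        simp only [lintegral_const_mul' _ _ ENNReal.ofReal_ne_top]
    _ = ∫⁻ t in Ioc (0 : ℝ) 1, ∫⁻ ξ, g ξ * (ENNReal.ofReal (t ^ finrank ℝ E)⁻¹ *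
          ∫⁻ _ in ball ξ (t * R), 1 ∂σ) ∂μ := by
        simp only [lintegral_setLIntegral_ball hg, setLIntegral_one,
          ← lintegral_const_mul' _ _ ENNReal.ofReal_ne_top, mul_left_comm]
    _ = ∫⁻ ξ, g ξ * conePotential σ 1 R ξ ∂μ := by
        rw [lintegral_lintegral_swap ((hg.comp measurable_snd).mul
          (hone.comp measurable_swap)).aemeasurable]
        exact lintegral_congr fun ξ =>
          lintegral_const_mul _ (hone.comp measurable_prodMk_left)

end BoundaryIntegral

section RieszPotential

lemma mul_rpow_neg_le_lintegral_edist_rpow_neg {X : Type*} [PseudoEMetricSpace X]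
    [MeasurableSpace X] [OpensMeasurableSpace X] {σ : Measure X} {c ε : ℝ≥0∞} {d β : ℝ}
    (hdβ : 0 ≤ d + β) {ξ z₀ : X} (hξ : edist ξ z₀ < ε) (hε : ε ≠ ⊤)
    (hσ : c * ε ^ d ≤ σ (eball z₀ ε)) :
    c * 2 ^ (-(d + β)) * ε ^ (-β) ≤ ∫⁻ z, edist ξ z ^ (-(d + β)) ∂σ := by
  calc c * 2 ^ (-(d + β)) * ε ^ (-β)
      = (2 * ε) ^ (-(d + β)) * (c * ε ^ d) := by
        rw [ENNReal.mul_rpow_of_ne_top (by simp) hε, show -β = -(d + β) + d by ring,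
          ENNReal.rpow_add _ _ hξ.ne_bot hε]
        ring
    _ ≤ (2 * ε) ^ (-(d + β)) * σ (eball z₀ ε) := by gcongr
    _ ≤ ∫⁻ z in eball z₀ ε, edist ξ z ^ (-(d + β)) ∂σ := by
        rw [← setLIntegral_const]
        refine setLIntegral_mono' measurableSet_eball fun z hz => ?_
        have hle : edist ξ z ≤ 2 * ε := by
          rw [two_mul]
          exact (edist_triangle_right ξ z z₀).trans (add_le_add hξ.le (mem_eball.1 hz).le)
        rw [ENNReal.rpow_neg, ENNReal.rpow_neg, ENNReal.inv_le_inv]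
        gcongr
    _ ≤ ∫⁻ z, edist ξ z ^ (-(d + β)) ∂σ := setLIntegral_le_lintegral _ _

lemma mul_infEDist_rpow_neg_le_lintegral_edist_rpow_neg {X : Type*} [PseudoEMetricSpace X]
    [MeasurableSpace X] [OpensMeasurableSpace X] {σ : Measure X} {Γ : Set X} {c ρ : ℝ≥0∞}
    {d β : ℝ} (hc : c ≠ ⊤) (hdβ : 0 ≤ d + β) {ξ : X} (hξ : infEDist ξ Γ < ρ)
    (hσ : ∀ z ∈ Γ, ∀ ε < ρ, edist ξ z < ε → c * ε ^ d ≤ σ (eball z ε)) :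
    c * 2 ^ (-(d + β)) * infEDist ξ Γ ^ (-β) ≤ ∫⁻ z, edist ξ z ^ (-(d + β)) ∂σ := by
  have : (𝓝[>] infEDist ξ Γ).NeBot := nhdsGT_neBot_of_exists_gt ⟨ρ, hξ⟩
  have hc2 : c * 2 ^ (-(d + β)) ≠ ⊤ := ENNReal.mul_ne_top hc (by simp)
  have htend : Tendsto (fun ε => c * 2 ^ (-(d + β)) * ε ^ (-β)) (𝓝[>] infEDist ξ Γ)
      (𝓝 (c * 2 ^ (-(d + β)) * infEDist ξ Γ ^ (-β))) :=
    ((ENNReal.continuous_const_mul hc2).comp ENNReal.continuous_rpow_const).continuousWithinAt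
  refine le_of_tendsto htend ?_
  filter_upwards [Ioo_mem_nhdsGT hξ] with ε hε
  obtain ⟨z₀, hz₀, hlt⟩ := infEDist_lt_iff.1 hε.1
  exact mul_rpow_neg_le_lintegral_edist_rpow_neg hdβ hlt hε.2.ne_top (hσ z₀ hz₀ ε hε.2 hlt)

variable [MeasurableSpace E] [BorelSpace E] [FiniteDimensional ℝ E] {μ : Measure E}
  [μ.IsAddHaarMeasure] {γ : ℝ}

lemma setLIntegral_ball_enorm_rpow_neg_ne_top (hγ0 : 0 ≤ γ) (hγ : γ < finrank ℝ E) (R : ℝ) :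
    ∫⁻ ξ in ball (0 : E) R, ‖ξ‖ₑ ^ (-γ) ∂μ ≠ ⊤ := by
  have hN : 0 < finrank ℝ E := Nat.cast_pos.1 (hγ0.trans_lt hγ)
  have : Nontrivial E := Module.nontrivial_of_finrank_pos hN
  have hint : IntegrableOn (fun ξ : E => ‖ξ‖ ^ (-γ)) (ball 0 R) μ := by
    rw [integrableOn_fun_norm_addHaar μ (f := fun t => t ^ (-γ))]
    refine IntegrableOn.congr_fun (f := fun t : ℝ => t ^ ((finrank ℝ E : ℝ) - 1 - γ)) ?_ ?_
      measurableSet_Ioo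
    · rcases le_or_gt R 0 with hR | hR
      · simp [Ioo_eq_empty hR.not_gt]
      · exact (intervalIntegral.integrableOn_Ioo_rpow_iff hR).2 (by linarith)
    · intro t ht
      simp only [smul_eq_mul]
      rw [← Real.rpow_natCast, ← Real.rpow_add ht.1, Nat.cast_pred hN, sub_eq_add_neg]
  refine ((lintegral_congr_ae ?_).trans_lt hint.2).ne
  have hne : ∀ᵐ ξ ∂μ, ξ ∉ ({0} : Set E) := measure_eq_zero_iff_ae_notMem.1 (measure_singleton 0)
  filter_upwards [ae_restrict_of_ae hne] with ξ hξ
  have : 0 < ‖ξ‖ := norm_pos_iff.2 hξ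
  rw [Real.enorm_of_nonneg (by positivity), ← ENNReal.ofReal_rpow_of_pos this, ofReal_norm]

lemma setLIntegral_lintegral_edist_rpow_neg_ne_top (hγ0 : 0 ≤ γ) (hγ : γ < finrank ℝ E)
    {σ : Measure E} [IsFiniteMeasure σ] {x : E} {R : ℝ} (hσ : ∀ᵐ z ∂σ, z ∈ ball x R) :
    ∫⁻ ξ in ball x R, ∫⁻ z, edist ξ z ^ (-γ) ∂σ ∂μ ≠ ⊤ := by
  have hmeas : Measurable fun p : E × E => edist p.1 p.2 ^ (-γ) := by fun_prop
  have hbound : ∀ᵐ z ∂σ, ∫⁻ ξ in ball x R, edist ξ z ^ (-γ) ∂μ ≤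
      ∫⁻ ξ in ball (0 : E) (R + R), ‖ξ‖ₑ ^ (-γ) ∂μ := by
    filter_upwards [hσ] with z hz
    have hsub : ball x R ⊆ (fun ξ => ξ - z) ⁻¹' ball 0 (R + R) := fun ξ hξ => by
      rw [mem_preimage, mem_ball_zero_iff, ← dist_eq_norm]
      exact (dist_triangle_right ξ z x).trans_lt (add_lt_add (mem_ball.1 hξ) (mem_ball.1 hz))
    refine (lintegral_mono_set hsub).trans_eq ?_
    simp only [edist_eq_enorm_sub]
    exact (measurePreserving_sub_right μ z).setLIntegral_comp_preimage measurableSet_ball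
      (by fun_prop : Measurable fun ξ : E => ‖ξ‖ₑ ^ (-γ))
  rw [lintegral_lintegral_swap hmeas.aemeasurable]
  refine ne_top_of_le_ne_top ?_ (lintegral_mono_ae hbound)
  rw [lintegral_const]
  exact ENNReal.mul_ne_top (setLIntegral_ball_enorm_rpow_neg_ne_top hγ0 hγ _) (measure_ne_top _ _)

end RieszPotential

section WeakGradient

variable {n : ℕ}

lemma integral_mul_fderiv_eq_inner_gradient {u ψ : Euc n → ℝ} (hu : LocallyIntegrable u volume)
    (hψ : ContDiff ℝ 1 ψ) (hψc : HasCompactSupport ψ) (w : Euc n) :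
    ∫ y, u y * fderiv ℝ ψ y w = inner ℝ w (∫ y, u y • gradient ψ y) := by
  have hcont : Continuous (gradient ψ) :=
    (InnerProductSpace.toDual ℝ (Euc n)).symm.continuous.comp (hψ.continuous_fderiv one_ne_zero)
  have hcpt : HasCompactSupport (gradient ψ) := (hψc.fderiv ℝ).comp_left (map_zero _)
  rw [← integral_inner (hu.integrable_smul_right_of_hasCompactSupport hcont hcpt)]
  refine integral_congr_ae (Eventually.of_forall fun y => ?_)
  simp only [inner_smul_right]
  rw [real_inner_comm, gradient, InnerProductSpace.toDual_symm_apply]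

lemma IsDistribGradOn.integral_smul_gradient {u ψ : Euc n → ℝ} {v : Euc n → Euc n}
    {O : Set (Euc n)} (huv : IsDistribGradOn u v O) (hψ : ContDiff ℝ (⊤ : ℕ∞) ψ)
    (hψc : HasCompactSupport ψ) (hψO : tsupport ψ ⊆ O) :
    ∫ y, u y • gradient ψ y = -∫ y, ψ y • v y := by
  have hcompl {y : Euc n} (hy : y ∉ O) : y ∉ tsupport ψ := fun h => hy (hψO h)
  have hleft : ∫ y in O, u y • gradient ψ y = ∫ y, u y • gradient ψ y :=
    setIntegral_eq_integral_of_forall_compl_eq_zero fun y hy => by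
      rw [gradient, fderiv_of_notMem_tsupport ℝ (hcompl hy), map_zero, smul_zero]
  have hright : ∫ y in O, ψ y • v y = ∫ y, ψ y • v y :=
    setIntegral_eq_integral_of_forall_compl_eq_zero fun y hy => by
      rw [image_eq_zero_of_notMem_tsupport (hcompl hy), zero_smul]
  rw [← hleft, ← hright]
  exact huv ψ hψ hψc hψO

lemma IsDistribGradOn.weakGradBound {u : Euc n → ℝ} {v : Euc n → Euc n} {g : Euc n → ℝ≥0∞}
    {O U : Set (Euc n)} (huv : IsDistribGradOn u v O) (hu : LocallyIntegrable u volume)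
    (hUO : U ⊆ O) (hvg : ∀ᵐ y, y ∈ U → ‖v y‖ₑ ≤ g y) : WeakGradBound volume u g U := by
  intro ψ hψ hψc hψU hψ0 w
  calc ‖∫ y, u y * fderiv ℝ ψ y w‖ₑ
      = ‖inner ℝ w (∫ y, ψ y • v y)‖ₑ := by
        rw [integral_mul_fderiv_eq_inner_gradient hu (hψ.of_le (by simp)) hψc,
          huv.integral_smul_gradient hψ hψc (hψU.trans hUO), inner_neg_right, enorm_neg]
    _ ≤ ‖w‖ₑ * ‖∫ y, ψ y • v y‖ₑ := by
        rw [← ofReal_norm, ← ofReal_norm w, ← ofReal_norm (∫ y, ψ y • v y),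
          ← ENNReal.ofReal_mul (norm_nonneg w)]
        exact ENNReal.ofReal_le_ofReal (norm_inner_le_norm _ _)
    _ ≤ ‖w‖ₑ * ∫⁻ y, ‖ψ y • v y‖ₑ := by
        gcongr
        exact enorm_integral_le_lintegral_enorm _
    _ ≤ ‖w‖ₑ * ∫⁻ y, ENNReal.ofReal (ψ y) * g y := by
        gcongr ‖w‖ₑ * ?_
        refine lintegral_mono_ae ?_
        filter_upwards [hvg] with y hy
        rw [enorm_smul, Real.enorm_of_nonneg (hψ0 y)]
        by_cases hyψ : y ∈ tsupport ψ
        · gcongr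
          exact hy (hψU hyψ)
        · simp [image_eq_zero_of_notMem_tsupport hyψ]

end WeakGradient

section Ahlfors

variable {n : ℕ} {d C₀ : ℝ} {Γ : Set (Euc n)}

lemma AhlforsRegular.le_measure_ball (hΓ : AhlforsRegular n d C₀ Γ) {x : Euc n} (hx : x ∈ Γ)
    {r : ℝ} (hr : 0 < r) : ENNReal.ofReal (C₀⁻¹ * r ^ d) ≤ μH[d].restrict Γ (ball x r) := by
  rw [Measure.restrict_apply measurableSet_ball, inter_comm]
  exact (hΓ x hx r hr).1

lemma AhlforsRegular.measure_ball_le (hΓ : AhlforsRegular n d C₀ Γ) (ξ : Euc n) {s : ℝ}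
    (hs : 0 < s) : μH[d].restrict Γ (ball ξ s) ≤ ENNReal.ofReal (C₀ * 2 ^ d * s ^ d) := by
  rw [Measure.restrict_apply measurableSet_ball, inter_comm]
  rcases (Γ ∩ ball ξ s).eq_empty_or_nonempty with hempty | ⟨z, hzΓ, hz⟩
  · simp [hempty]
  · have hsub : ball ξ s ⊆ ball z (2 * s) :=
      ball_subset_ball' (by linarith [mem_ball'.1 hz])
    rw [mul_assoc, ← Real.mul_rpow zero_le_two hs.le]
    exact (measure_mono (inter_subset_inter_right _ hsub)).trans (hΓ z hzΓ _ (by positivity)).2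

lemma AhlforsRegular.isFiniteMeasure_restrict_ball (hΓ : AhlforsRegular n d C₀ Γ) (x : Euc n)
    {r : ℝ} (hr : 0 < r) : IsFiniteMeasure ((μH[d].restrict Γ).restrict (ball x r)) :=
  isFiniteMeasure_restrict.2 ((hΓ.measure_ball_le x hr).trans_lt ENNReal.ofReal_lt_top).ne

lemma AhlforsRegular.mul_infEDist_rpow_neg_le_lintegral_edist_rpow_neg
    (hΓ : AhlforsRegular n d C₀ Γ) (hC₀ : 0 < C₀) {β : ℝ} (hdβ : 0 ≤ d + β) {x ξ : Euc n}
    (hx : x ∈ Γ) {S : ℝ} (hξ : ξ ∈ ball x S) :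
    ENNReal.ofReal C₀⁻¹ * 2 ^ (-(d + β)) * infEDist ξ Γ ^ (-β) ≤
      ∫⁻ z in ball x (3 * S), edist ξ z ^ (-(d + β)) ∂μH[d].restrict Γ := by
  refine _root_.mul_infEDist_rpow_neg_le_lintegral_edist_rpow_neg (ρ := ENNReal.ofReal S)
    ENNReal.ofReal_ne_top hdβ ((infEDist_le_edist_of_mem hx).trans_lt (edist_lt_ofReal.2 hξ))
    fun z hz ε hε hξz => ?_
  lift ε to ℝ≥0 using hε.ne_top
  rw [← ENNReal.ofReal_coe_nnreal] at hε hξz ⊢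
  have hε0 : 0 < (ε : ℝ) := ENNReal.ofReal_pos.1 hξz.pos
  have hεS : (ε : ℝ) < S := (ENNReal.ofReal_lt_ofReal_iff_of_nonneg hε0.le).1 hε
  have hsub : ball z ε ⊆ ball x (3 * S) := ball_subset_ball' (by
    linarith [dist_triangle_left z x ξ, mem_ball.1 hξ, edist_lt_ofReal.1 hξz])
  rw [eball_ofReal, ENNReal.ofReal_rpow_of_pos hε0, ← ENNReal.ofReal_mul (inv_nonneg.2 hC₀.le),
    Measure.restrict_eq_self _ hsub]
  exact hΓ.le_measure_ball hz hε0

lemma AhlforsRegular.setLIntegral_ball_infEDist_rpow_neg_ne_top (hΓ : AhlforsRegular n d C₀ Γ)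
    (hne : Γ.Nonempty) (hC₀ : 0 < C₀) {β : ℝ} (hdβ0 : 0 ≤ d + β) (hdβ : d + β < n) (z : Euc n)
    (R : ℝ) : ∫⁻ ξ in ball z R, infEDist ξ Γ ^ (-β) ≠ ⊤ := by
  obtain ⟨x, hx⟩ := hne
  set S := |R| + dist z x + 1
  have hzS : ball z R ⊆ ball x S := ball_subset_ball' (by linarith [le_abs_self R])
  have hS : 0 < S := by positivity
  have := hΓ.isFiniteMeasure_restrict_ball x (by positivity : 0 < 3 * S)
  set σ := (μH[d].restrict Γ).restrict (ball x (3 * S))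
  set c : ℝ≥0∞ := ENNReal.ofReal C₀⁻¹ * 2 ^ (-(d + β))
  have hc0 : c ≠ 0 := mul_ne_zero (ENNReal.ofReal_pos.2 (inv_pos.2 hC₀)).ne' (by simp)
  have hc : c ≠ ⊤ := ENNReal.mul_ne_top ENNReal.ofReal_ne_top (by simp)
  have hfin : ∫⁻ ξ in ball x (3 * S), ∫⁻ z, edist ξ z ^ (-(d + β)) ∂σ ≠ ⊤ :=
    setLIntegral_lintegral_edist_rpow_neg_ne_top hdβ0 (by simpa using hdβ)
      (ae_restrict_mem measurableSet_ball)
  have hle : c * ∫⁻ ξ in ball z R, infEDist ξ Γ ^ (-β) ≤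
      ∫⁻ ξ in ball x (3 * S), ∫⁻ z, edist ξ z ^ (-(d + β)) ∂σ := by
    rw [← lintegral_const_mul' _ _ hc]
    calc _ ≤ ∫⁻ ξ in ball x S, c * infEDist ξ Γ ^ (-β) := lintegral_mono_set hzS
      _ ≤ ∫⁻ ξ in ball x S, ∫⁻ z, edist ξ z ^ (-(d + β)) ∂σ :=
          setLIntegral_mono' measurableSet_ball fun ξ hξ =>
            hΓ.mul_infEDist_rpow_neg_le_lintegral_edist_rpow_neg hC₀ hdβ0 hx hξ
      _ ≤ _ := lintegral_mono_set (ball_subset_ball (by linarith))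
  exact (ENNReal.lt_top_of_mul_ne_top_right (ne_top_of_le_ne_top hfin hle) hc0).ne

lemma AhlforsRegular.nullShadows (hΓ : AhlforsRegular n d C₀ Γ) (hne : Γ.Nonempty)
    (hC₀ : 0 < C₀) (hd0 : 0 ≤ d) (hd : d < n - 1) : NullShadows volume Γ := by
  refine nullShadows_of_lintegral_inv_infEDist_ne_top fun z R => ?_
  simp only [← ENNReal.rpow_neg_one]
  exact hΓ.setLIntegral_ball_infEDist_rpow_neg_ne_top hne hC₀ (by linarith) (by linarith) z R

lemma ofReal_weightW_le (hne : Γ.Nonempty) (hd : d < n - 1) (ξ : Euc n) :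
    ENNReal.ofReal (weightW n d Γ ξ) ≤ infEDist ξ Γ ^ (-((n : ℝ) - 1 - d)) := by
  rw [weightW, show d + 1 - (n : ℝ) = -((n : ℝ) - 1 - d) by ring]
  rcases (infDist_nonneg (x := ξ) (s := Γ)).eq_or_lt with h0 | hpos
  · rw [← h0, Real.zero_rpow (by linarith), ENNReal.ofReal_zero]
    exact zero_le
  · rw [← ENNReal.ofReal_rpow_of_pos hpos, infDist, ENNReal.ofReal_toReal (infEDist_ne_top hne)]

lemma AhlforsRegular.measW_ball_lt_top (hΓ : AhlforsRegular n d C₀ Γ) (hne : Γ.Nonempty)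
    (hC₀ : 0 < C₀) (hd0 : 0 ≤ d) (hd : d < n - 1) (z : Euc n) (R : ℝ) :
    measW n d Γ (ball z R) < ⊤ := by
  rw [measW, withDensity_apply _ measurableSet_ball]
  refine (lintegral_mono fun ξ => ofReal_weightW_le hne hd ξ).trans_lt (lt_top_iff_ne_top.2 ?_)
  exact hΓ.setLIntegral_ball_infEDist_rpow_neg_ne_top hne hC₀ (by linarith) (by linarith) z R

lemma MemW.integrableOn_ball {u : Euc n → ℝ} {v : Euc n → Euc n} (hW : MemW n d Γ u v)
    (hvol : ∀ᵐ y, y ∉ Γ) {z : Euc n} {R : ℝ} (hball : measW n d Γ (ball z R) < ⊤) :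
    IntegrableOn v (ball z R) (measW n d Γ) := by
  have hac : measW n d Γ ≪ volume := withDensity_absolutelyContinuous _ _
  have hrestrict : (measW n d Γ).restrict Γᶜ = measW n d Γ :=
    Measure.restrict_eq_self_of_ae_mem (hac.ae_le hvol)
  have hmeas : AEStronglyMeasurable v (measW n d Γ) := by
    rw [← hrestrict]
    exact hW.gradLocInt.aestronglyMeasurable.mono_ac (hac.restrict Γᶜ)
  have hL2 : MemLp v 2 (measW n d Γ) := by
    refine (memLp_two_iff_integrable_sq_norm hmeas).2 ⟨hmeas.norm.pow 2, ?_⟩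
    rw [hasFiniteIntegral_iff_ofReal (Eventually.of_forall fun y => by positivity), ← hrestrict]
    exact hW.l2
  have : IsFiniteMeasure ((measW n d Γ).restrict (ball z R)) := isFiniteMeasure_restrict.2 hball.ne
  exact (hL2.restrict _).integrable one_le_two

lemma AhlforsRegular.conePotential_one_le (hΓ : AhlforsRegular n d C₀ Γ) (hC₀ : 0 ≤ C₀)
    (hd : d < n - 1) {σ : Measure (Euc n)} (hσ : σ ≤ μH[d].restrict Γ) {R : ℝ} (hR : 0 < R)
    {ξ : Euc n} (hξ : 0 < infDist ξ Γ) :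
    conePotential σ 1 R ξ ≤ ENNReal.ofReal (C₀ * 2 ^ d / (n - 1 - d) * R ^ ((n : ℝ) - 1)) *
      ENNReal.ofReal (weightW n d Γ ξ) := by
  have hnear : μH[d].restrict Γ (ball ξ (infDist ξ Γ)) = 0 := by
    rw [Measure.restrict_apply measurableSet_ball, disjoint_ball_infDist.inter_eq, measure_empty]
  have h := _root_.conePotential_one_le (E := Euc n) (σ := σ) (A := C₀ * 2 ^ d) (d := d) (ξ := ξ)
    (by positivity) (by simpa using hd) hR hξ (le_zero_iff.1 ((hσ _).trans_eq hnear))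
    fun s hs => (hσ _).trans (hΓ.measure_ball_le ξ (hξ.trans hs))
  have hgap : 0 < (n : ℝ) - 1 - d := by linarith
  rw [finrank_euclideanSpace_fin] at h
  rwa [← ENNReal.ofReal_mul (by positivity), weightW]

lemma AhlforsRegular.lintegral_conePotential_le (hΓ : AhlforsRegular n d C₀ Γ) (hC₀ : 0 ≤ C₀)
    (hd : d < n - 1) (hcl : IsClosed Γ) (hne : Γ.Nonempty) {σ : Measure (Euc n)} [SFinite σ]
    (hσ : σ ≤ μH[d].restrict Γ) {R : ℝ} (hR : 0 < R) {g : Euc n → ℝ≥0∞} (hg : Measurable g)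
    (hgΓ : ∀ ξ ∈ Γ, g ξ = 0) :
    ∫⁻ z, conePotential volume g R z ∂σ ≤
      ENNReal.ofReal (C₀ * 2 ^ d / (n - 1 - d) * R ^ ((n : ℝ) - 1)) *
        ∫⁻ ξ, g ξ ∂measW n d Γ := by
  have hw : Measurable fun ξ => ENNReal.ofReal (weightW n d Γ ξ) :=
    (measurable_infDist.pow_const _).ennreal_ofReal
  rw [lintegral_conePotential hg, measW, lintegral_withDensity_eq_lintegral_mul _ hw hg,
    ← lintegral_const_mul _ (hw.mul hg)]
  refine lintegral_mono fun ξ => ?_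
  by_cases hξ : ξ ∈ Γ
  · simp [hgΓ ξ hξ]
  · have hpos : 0 < infDist ξ Γ := (hcl.notMem_iff_infDist_pos hne).1 hξ
    refine (mul_le_mul_right (hΓ.conePotential_one_le hC₀ hd hσ hR hpos) (g ξ)).trans_eq ?_
    rw [Pi.mul_apply]
    ring

end Ahlfors

section BoundaryPoincare

variable {n : ℕ} {d C₀ : ℝ} {Γ : Set (Euc n)} {u : Euc n → ℝ} {v : Euc n → Euc n}

lemma MemW.exists_weakGradBound (hW : MemW n d Γ u v) (hu : LocallyIntegrable u volume)
    (hcl : IsClosed Γ) (hvol : ∀ᵐ y, y ∉ Γ) {U : Set (Euc n)} (hU : MeasurableSet U) :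
    ∃ g : Euc n → ℝ≥0∞, Measurable g ∧ (∀ ξ ∉ U \ Γ, g ξ = 0) ∧
      WeakGradBound volume u g (U \ Γ) ∧
      ∫⁻ ξ, g ξ ∂measW n d Γ = ∫⁻ ξ in U, ‖v ξ‖ₑ ∂measW n d Γ := by
  have hv : AEStronglyMeasurable v volume := by
    rw [← Measure.restrict_eq_self_of_ae_mem (s := Γᶜ) hvol]
    exact hW.gradLocInt.aestronglyMeasurable
  have hUΓ : MeasurableSet (U \ Γ) := hU.diff hcl.measurableSet
  have hac : measW n d Γ ≪ volume := withDensity_absolutelyContinuous _ _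
  refine ⟨(U \ Γ).indicator fun ξ => ‖hv.mk v ξ‖ₑ,
    hv.stronglyMeasurable_mk.enorm.indicator hUΓ,
    fun ξ hξ => indicator_of_notMem hξ _, hW.isGrad.weakGradBound hu (fun _ hy => hy.2) ?_, ?_⟩
  · filter_upwards [hv.ae_eq_mk] with y hy hyU
    rw [indicator_of_mem hyU, hy]
  · rw [← lintegral_indicator hU]
    refine lintegral_congr_ae (hac.ae_le ?_)
    filter_upwards [hv.ae_eq_mk, hvol] with y hy hyΓ
    by_cases hyU : y ∈ U
    · rw [indicator_of_mem (mem_sdiff_of_mem hyU hyΓ), indicator_of_mem hyU, hy]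
    · rw [indicator_of_notMem fun h => hyU h.1, indicator_of_notMem hyU]

lemma AhlforsRegular.mul_setLIntegral_ball_enorm_sub_le (hΓ : AhlforsRegular n d C₀ Γ)
    (hne : Γ.Nonempty) (hcl : IsClosed Γ) (hC₀ : 0 < C₀) (hd0 : 0 ≤ d) (hd : d < n - 1)
    (hW : MemW n d Γ u v) (hu : LocallyIntegrable u volume) {x : Euc n} (hx : x ∈ Γ) {r a : ℝ}
    (hr : 0 < r) (htrace : ∀ᵐ z ∂μH[d].restrict (Γ ∩ ball x r), HasTraceAt u z a) :
    (∫⁻ y in ball x r, ‖u y - a‖ₑ) * ENNReal.ofReal (C₀⁻¹ * (r / 2) ^ d) ≤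
      4 ^ (n + 2) * ENNReal.ofReal r *
        (ENNReal.ofReal (C₀ * 2 ^ d / (n - 1 - d) * (2 * r) ^ ((n : ℝ) - 1)) *
          ∫⁻ y in ball x r, ‖v y‖ₑ ∂measW n d Γ) := by
  have hnull : NullShadows volume Γ := hΓ.nullShadows hne hC₀ hd0 hd
  obtain ⟨g, hg, hgU, hug, hgv⟩ :=
    hW.exists_weakGradBound hu hcl hnull.ae_notMem (measurableSet_ball (x := x) (ε := r))
  have := hΓ.isFiniteMeasure_restrict_ball x (half_pos hr)
  set σ := (μH[d].restrict Γ).restrict (ball x (r / 2))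
  have hσ : ∀ᵐ z ∂σ, HasTraceAt u z a ∧ z ∈ ball x (r / 2) := by
    refine (Eventually.filter_mono (ae_mono ?_) htrace).and (ae_restrict_mem measurableSet_ball)
    calc σ = μH[d].restrict (Γ ∩ ball x (r / 2)) := by
          rw [inter_comm, ← Measure.restrict_restrict measurableSet_ball]
      _ ≤ μH[d].restrict (Γ ∩ ball x r) :=
          Measure.restrict_mono_set _ (inter_subset_inter_right Γ (ball_subset_ball (by linarith)))
  calc (∫⁻ y in ball x r, ‖u y - a‖ₑ) * ENNReal.ofReal (C₀⁻¹ * (r / 2) ^ d)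
      ≤ ∫⁻ _, (∫⁻ y in ball x r, ‖u y - a‖ₑ) ∂σ := by
        rw [lintegral_const, Measure.restrict_apply_univ]
        gcongr
        exact hΓ.le_measure_ball hx (half_pos hr)
    _ ≤ ∫⁻ z, 4 ^ (n + 2) * ENNReal.ofReal r * conePotential volume g (2 * r) z ∂σ := by
        refine lintegral_mono_ae ?_
        filter_upwards [hσ] with z ⟨hz, hzx⟩
        simpa using setLIntegral_ball_enorm_sub_le_conePotential hcl hnull hu hg hug
          (fun ξ hξ => hgU ξ fun h => hξ h.1) hzx hz
    _ ≤ _ := by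
        rw [lintegral_const_mul' _ _ (by finiteness), ← hgv]
        gcongr
        exact hΓ.lintegral_conePotential_le hC₀.le hd hcl hne Measure.restrict_le_self
          (by positivity) hg fun ξ hξ => hgU ξ fun h => h.2 hξ

/-- The constant of the boundary Poincaré inequality in dimension `n` for a boundary that is
`d`-Ahlfors regular with constant `C₀`. -/
def boundaryPoincareConst (n : ℕ) (d C₀ : ℝ) : ℝ :=
  C₀ * 2 ^ d * 4 ^ (n + 2) * (C₀ * 2 ^ d / (n - 1 - d)) * 2 ^ ((n : ℝ) - 1) /
    volume.real (ball (0 : Euc n) 1)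

lemma volume_real_ball_pos (n : ℕ) : 0 < volume.real (ball (0 : Euc n) 1) :=
  ENNReal.toReal_pos (measure_ball_pos volume _ one_pos).ne' measure_ball_lt_top.ne

lemma boundaryPoincareConst_pos (hC₀ : 0 < C₀) (hd : d < n - 1) :
    0 < boundaryPoincareConst n d C₀ := by
  have : 0 < (n : ℝ) - 1 - d := by linarith
  have := volume_real_ball_pos n
  unfold boundaryPoincareConst
  positivity

lemma div_volume_real_ball_le_of_mul_le (hC₀ : 0 < C₀) {I J r : ℝ} (hr : 0 < r) (x : Euc n)
    (hIJ : I * (C₀⁻¹ * (r / 2) ^ d) ≤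
      4 ^ (n + 2) * r * (C₀ * 2 ^ d / (n - 1 - d) * (2 * r) ^ ((n : ℝ) - 1) * J)) :
    I / volume.real (ball x r) ≤ boundaryPoincareConst n d C₀ * r ^ (-d) * J := by
  have hω := volume_real_ball_pos n
  have hball : volume.real (ball x r) = r ^ n * volume.real (ball (0 : Euc n) 1) := by
    rw [measureReal_def, Measure.addHaar_ball_of_pos _ x hr, ENNReal.toReal_mul,
      ENNReal.toReal_ofReal (by positivity), finrank_euclideanSpace_fin, measureReal_def]
  have hrn : r ^ ((n : ℝ) - 1) = r ^ n / r := by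
    rw [Real.rpow_sub_one hr.ne', Real.rpow_natCast]
  rw [hball, boundaryPoincareConst, Real.rpow_neg hr.le, div_le_iff₀ (by positivity)]
  rw [Real.div_rpow hr.le zero_le_two, Real.mul_rpow zero_le_two hr.le, hrn,
    ← le_div_iff₀ (by positivity)] at hIJ
  refine hIJ.trans_eq ?_
  field_simp

theorem AhlforsRegular.setAverage_abs_sub_le (hΓ : AhlforsRegular n d C₀ Γ)
    (hne : Γ.Nonempty) (hcl : IsClosed Γ) (hC₀ : 0 < C₀) (hd0 : 0 ≤ d) (hd : d < n - 1)
    (hW : MemW n d Γ u v) (hu : LocallyIntegrable u volume) {x : Euc n} (hx : x ∈ Γ) {r a : ℝ}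
    (hr : 0 < r) (htrace : ∀ᵐ z ∂μH[d].restrict (Γ ∩ ball x r), HasTraceAt u z a) :
    ⨍ y in ball x r, |u y - a| ≤
      boundaryPoincareConst n d C₀ * r ^ (-d) * ∫ y in ball x r, ‖v y‖ ∂measW n d Γ := by
  have : 0 < (n : ℝ) - 1 - d := by linarith
  have hvint : IntegrableOn v (ball x r) (measW n d Γ) :=
    hW.integrableOn_ball (hΓ.nullShadows hne hC₀ hd0 hd).ae_notMem
      (hΓ.measW_ball_lt_top hne hC₀ hd0 hd x r)
  have huint : IntegrableOn (fun y => u y - a) (ball x r) volume :=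
    (integrableOn_ball hu x r).sub (integrableOn_const measure_ball_lt_top.ne)
  have hcore := hΓ.mul_setLIntegral_ball_enorm_sub_le hne hcl hC₀ hd0 hd hW hu hx hr htrace
  rw [← ofReal_integral_norm_eq_lintegral_enorm huint,
    ← ofReal_integral_norm_eq_lintegral_enorm hvint, ← ENNReal.ofReal_ofNat 4,
    ← ENNReal.ofReal_pow (by positivity), ← ENNReal.ofReal_mul (by positivity),
    ← ENNReal.ofReal_mul (by positivity), ← ENNReal.ofReal_mul (by positivity),
    ← ENNReal.ofReal_mul (by positivity), ENNReal.ofReal_le_ofReal_iff (by positivity)] at hcore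
  rw [setAverage_eq, smul_eq_mul, inv_mul_eq_div]
  exact div_volume_real_ball_le_of_mul_le hC₀ hr x hcore

end BoundaryPoincare

/-- boundary Poincaré inequality for functions with vanishing trace. -/
theorem statement6 (n : ℕ) (hn : 2 ≤ n) (d C₀ : ℝ) (hd0 : 0 < d)
    (hdn : d < (n : ℝ) - 1) (hC₀ : 1 ≤ C₀) :
    ∃ C : ℝ, 0 < C ∧
      ∀ Γ : Set (Euc n), Γ.Nonempty → IsClosed Γ → AhlforsRegular n d C₀ Γ →
        ∀ u v, MemW n d Γ u v → LocallyIntegrable u volume →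
          ∀ x ∈ Γ, ∀ r : ℝ, 0 < r →
            (∀ᵐ z ∂(μH[d].restrict (Γ ∩ ball x r)), HasTraceAt u z 0) →
            ⨍ y in ball x r, |u y| ≤
              C * r ^ (-d) * ∫ y in ball x r, ‖v y‖ ∂(measW n d Γ) := by
  have hC₀pos : 0 < C₀ := zero_lt_one.trans_le hC₀
  refine ⟨boundaryPoincareConst n d C₀, boundaryPoincareConst_pos hC₀pos hdn, ?_⟩
  intro Γ hne hcl hΓ u v hW hu x hx r hr htrace
  simpa using hΓ.setAverage_abs_sub_le hne hcl hC₀pos hd0.le hdn hW hu hx hr htrace
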